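/- arXiv:2503.10208 — 6 statements merged into one kernel-verified Lean document; each statement's English description precedes it below -/
import Mathlib

section
/- Let n ≥ 2 and let L be a smooth operator field on ℝⁿ such that L(x) is a strictly upper triangular matrix for every x. Then the generalized Haantjes torsion of level n − 1 vanishes identically: T^{(n−1)}_L(ξ, η)(x) = 0 for all smooth vector fields ξ, η on ℝⁿ and all x. -/
/-!
The Nijenhuis torsion is tensorial. At a point `x`, put `A = L x` and let `D u` be the derivative
of `L` at `x` in the direction `u`. The derivatives of `ξ` and `η` cancel, and
`T_L(ξ, η)(x) = B (ξ x) (η x)` with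
`B u v = D (A u) v - D (A v) u - A (D u v) + A (D v u)`.
The higher torsions are therefore obtained from `B` by the same recursion carried out in the
single vector space `ℝⁿ`, with the fixed strictly upper triangular matrix `A`; moreover every
`D u` is strictly upper triangular, since the vanishing entries of `L` vanish identically.

Let `V_k` be the span of the first `k` basis vectors (`0` for `k ≤ 0`), so that
`A V_k ⊆ V_{k-1}` and `D u V_k ⊆ V_{k-1}`. The level-`m` torsion maps `V_i × V_j` into
`V_{i+j-1-2m}`: for `m = 1` this is read off from the formula for `B`, and each of the four terms
of the recursion lowers the index by two (`stepTor_mem_flag`). For `m = n - 1` it follows that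
the torsion vanishes on `V_n × V_{n-1}`. It is bilinear and alternating, and modulo `V_{n-1}` any
two vectors are proportional, so it vanishes everywhere.
-/

open Matrix

/-- A vector field on ℝⁿ. -/
abbrev Vec (n : ℕ) := Fin n → ℝ
abbrev VF (n : ℕ) := Vec n → Vec n
abbrev OpField (n : ℕ) := Vec n → Matrix (Fin n) (Fin n) ℝ

/-- Smooth (C^∞) vector field. -/
def SmoothVF {n : ℕ} (ξ : VF n) : Prop := ContDiff ℝ (⊤ : ℕ∞) ξ

/-- Smooth (C^∞) operator field, entrywise. -/
def SmoothOp {n : ℕ} (L : OpField n) : Prop :=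
  ∀ i j : Fin n, ContDiff ℝ (⊤ : ℕ∞) fun x => L x i j

/-- Lie bracket of vector fields. -/
noncomputable def lieB {n : ℕ} (ξ η : VF n) : VF n :=
  fun x => fderiv ℝ η x (ξ x) - fderiv ℝ ξ x (η x)

/-- Pointwise action of an operator field on a vector field. -/
def app {n : ℕ} (L : OpField n) (ξ : VF n) : VF n := fun x => (L x).mulVec (ξ x)

/-- Nijenhuis torsion. -/
noncomputable def nijTor {n : ℕ} (L : OpField n) (ξ η : VF n) : VF n :=
  app L (app L (lieB ξ η)) + lieB (app L ξ) (app L η)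
    - app L (lieB (app L ξ) η) - app L (lieB ξ (app L η))

/-- Generalized Haantjes torsion: `genTor L m` is the torsion of level `m + 1`,
so `genTor L 0` is the Nijenhuis torsion `T^{(1)}_L` and `genTor L (m-1) = T^{(m)}_L`. -/
noncomputable def genTor {n : ℕ} (L : OpField n) : ℕ → VF n → VF n → VF n
  | 0 => nijTor L
  | m + 1 => fun ξ η =>
      app L (app L (genTor L m ξ η)) + genTor L m (app L ξ) (app L η)
        - app L (genTor L m (app L ξ) η) - app L (genTor L m ξ (app L η))

/-- The Haantjes torsion `H_L = T^{(2)}_L`. -/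
noncomputable def haantjes {n : ℕ} (L : OpField n) : VF n → VF n → VF n := genTor L 1

/-- Frölicher–Nijenhuis bracket of two operator fields. -/
noncomputable def fnB {n : ℕ} (K L : OpField n) (ξ η : VF n) : VF n :=
  lieB (app K ξ) (app L η) + lieB (app L ξ) (app K η)
    - app L (lieB (app K ξ) η) - app L (lieB ξ (app K η))
    - app K (lieB (app L ξ) η) - app K (lieB ξ (app L η))
    + app L (app K (lieB ξ η)) + app K (app L (lieB ξ η))

/-- Generalized Haantjes bracket: `genB K L m` is the bracket of level `m + 1`,
so `genB K L 0 = [[K,L]]` and `genB K L (m-1) = H^{(m)}_{K,L}`. -/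
noncomputable def genB {n : ℕ} (K L : OpField n) : ℕ → VF n → VF n → VF n
  | 0 => fnB K L
  | m + 1 => fun ξ η =>
      app K (app L (genB K L m ξ η)) + genB K L m (app K ξ) (app L η)
        - app L (genB K L m (app K ξ) η) - app K (genB K L m ξ (app L η))
        + app L (app K (genB K L m ξ η)) + genB K L m (app L ξ) (app K η)
        - app K (genB K L m (app L ξ) η) - app L (genB K L m ξ (app K η))

/-- Upper triangular matrix. -/
def UpperTri {n : ℕ} (A : Matrix (Fin n) (Fin n) ℝ) : Prop :=
  ∀ i j : Fin n, j < i → A i j = 0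

/-- Strictly upper triangular matrix. -/
def StrictUpperTri {n : ℕ} (A : Matrix (Fin n) (Fin n) ℝ) : Prop :=
  ∀ i j : Fin n, j ≤ i → A i j = 0

/-- Jacobian matrix of a map `f : ℝⁿ → ℝⁿ` at a point. -/
noncomputable def jacobianMatrix {n : ℕ} (f : VF n) (x : Vec n) :
    Matrix (Fin n) (Fin n) ℝ :=
  Matrix.of fun i j => fderiv ℝ f x (Pi.single j 1) i

/-- `L` is locally reducible, near `p`, to a form whose matrix satisfies `P`
(e.g. upper triangularity) in suitable local coordinates: there are an open
neighbourhood `U` of `p` and a smooth diffeomorphism `φ` from `U` onto an open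
set, with smooth inverse `ψ`, such that the pushforward operator field
`y ↦ Dφ(φ⁻¹ y) · L(φ⁻¹ y) · (Dφ(φ⁻¹ y))⁻¹ = Dφ(ψ y) · L(ψ y) · Dψ(y)`
satisfies `P` at every point of `φ '' U`. -/
def LocallyReducible {n : ℕ} (L : OpField n) (p : Vec n)
    (P : Matrix (Fin n) (Fin n) ℝ → Prop) : Prop :=
  ∃ U : Set (Vec n), IsOpen U ∧ p ∈ U ∧
    ∃ φ ψ : VF n,
      ContDiffOn ℝ (⊤ : ℕ∞) φ U ∧ IsOpen (φ '' U) ∧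
      ContDiffOn ℝ (⊤ : ℕ∞) ψ (φ '' U) ∧
      (∀ x ∈ U, ψ (φ x) = x) ∧ (∀ y ∈ φ '' U, φ (ψ y) = y) ∧
      ∀ y ∈ φ '' U, P (jacobianMatrix φ (ψ y) * L (ψ y) * jacobianMatrix ψ y)

/-- The derivative of the operator field `L` at `x` in the direction `u`, taken entrywise. -/
noncomputable def dOp {n : ℕ} (L : OpField n) (x u : Vec n) : Matrix (Fin n) (Fin n) ℝ :=
  Matrix.of fun i j => fderiv ℝ (fun y => L y i j) x u

lemma dOp_add_smul {n : ℕ} (L : OpField n) (x u v : Vec n) (c : ℝ) :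
    dOp L x (u + c • v) = dOp L x u + c • dOp L x v := by
  ext i j
  simp [dOp]

lemma dOp_strictUpperTri {n : ℕ} {L : OpField n} (hLt : ∀ x : Vec n, StrictUpperTri (L x))
    (x u : Vec n) : StrictUpperTri (dOp L x u) := by
  intro i j hij
  have h : (fun y => L y i j) = fun _ => (0 : ℝ) := funext fun y => hLt y i j hij
  simp [dOp, h]

lemma hasFDerivAt_app {n : ℕ} {L : OpField n} (hL : SmoothOp L) {η : VF n}
    (hη : Differentiable ℝ η) (x : Vec n) :
    DifferentiableAt ℝ (app L η) x ∧
    ∀ w, fderiv ℝ (app L η) x w = dOp L x w *ᵥ η x + L x *ᵥ fderiv ℝ η x w := by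
  have hL' : ∀ i j, HasFDerivAt (fun y => L y i j) (fderiv ℝ (fun y => L y i j) x) x :=
    fun i j => ((hL i j).differentiable (by simp) x).hasFDerivAt
  have hη' : ∀ j, HasFDerivAt (fun y => η y j)
      ((ContinuousLinearMap.proj j).comp (fderiv ℝ η x)) x :=
    fun j => (hasFDerivAt_pi'.1 (hη x).hasFDerivAt) j
  have key : HasFDerivAt (app L η) (ContinuousLinearMap.pi fun i =>
      ∑ j, (L x i j • (ContinuousLinearMap.proj j).comp (fderiv ℝ η x)
        + η x j • fderiv ℝ (fun y => L y i j) x)) x := by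
    rw [hasFDerivAt_pi]
    intro i
    have h := HasFDerivAt.fun_sum (u := Finset.univ) fun j _ => (hL' i j).mul (hη' j)
    exact h
  refine ⟨key.differentiableAt, fun w => ?_⟩
  rw [key.fderiv]
  ext i
  simp [dOp, Matrix.mulVec, dotProduct, Finset.sum_add_distrib, mul_comm, add_comm]

/-- One step of the torsion recursion, in a fixed vector space with a fixed matrix `A`. -/
def stepTor {n : ℕ} (A : Matrix (Fin n) (Fin n) ℝ) (G : Vec n → Vec n → Vec n) :
    Vec n → Vec n → Vec n :=
  fun u v => A *ᵥ (A *ᵥ G u v) + G (A *ᵥ u) (A *ᵥ v) - A *ᵥ G (A *ᵥ u) v - A *ᵥ G u (A *ᵥ v)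

/-- The value at `x` of the torsion of level `m + 1`, as a function of the values at `x` of its
two arguments (same indexing as `genTor`). -/
noncomputable def ptTor {n : ℕ} (L : OpField n) (x : Vec n) : ℕ → Vec n → Vec n → Vec n
  | 0 => fun u v => dOp L x (L x *ᵥ u) *ᵥ v - dOp L x (L x *ᵥ v) *ᵥ u
      - L x *ᵥ (dOp L x u *ᵥ v) + L x *ᵥ (dOp L x v *ᵥ u)
  | m + 1 => stepTor (L x) (ptTor L x m)

/-- Tensoriality of the torsions. -/
lemma genTor_eq_ptTor {n : ℕ} {L : OpField n} (hL : SmoothOp L) (m : ℕ) :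
    ∀ {ξ η : VF n}, Differentiable ℝ ξ → Differentiable ℝ η → ∀ x : Vec n,
      genTor L m ξ η x = ptTor L x m (ξ x) (η x) := by
  induction m with
  | zero =>
    intro ξ η hξ hη x
    have hdξ := (hasFDerivAt_app hL hξ x).2
    have hdη := (hasFDerivAt_app hL hη x).2
    simp only [genTor, nijTor, ptTor, Pi.add_apply, Pi.sub_apply, app, lieB]
    change _ + (fderiv ℝ (app L η) x _ - fderiv ℝ (app L ξ) x _)
      - _ *ᵥ (_ - fderiv ℝ (app L ξ) x _) - _ *ᵥ (fderiv ℝ (app L η) x _ - _) = _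
    simp only [hdξ, hdη, Matrix.mulVec_sub, Matrix.mulVec_add]
    abel
  | succ m ih =>
    intro ξ η hξ hη x
    have hξ' : Differentiable ℝ (app L ξ) := fun y => (hasFDerivAt_app hL hξ y).1
    have hη' : Differentiable ℝ (app L η) := fun y => (hasFDerivAt_app hL hη y).1
    simp only [genTor, ptTor, stepTor, Pi.add_apply, Pi.sub_apply, app]
    change _ + genTor L m (app L ξ) (app L η) x - _ *ᵥ genTor L m (app L ξ) η x
      - _ *ᵥ genTor L m ξ (app L η) x = _
    rw [ih hξ hη, ih hξ' hη', ih hξ' hη, ih hξ hη']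
    rfl

lemma ptTor_add_smul {n : ℕ} (L : OpField n) (x : Vec n) (m : ℕ) :
    ∀ (u v w : Vec n) (c : ℝ),
      ptTor L x m u (v + c • w) = ptTor L x m u v + c • ptTor L x m u w := by
  induction m with
  | zero =>
    intro u v w c
    simp only [ptTor, dOp_add_smul, Matrix.mulVec_add, Matrix.mulVec_smul, Matrix.add_mulVec,
      Matrix.smul_mulVec, smul_add, smul_sub]
    abel
  | succ m ih =>
    intro u v w c
    simp only [ptTor, stepTor, ih, Matrix.mulVec_add, Matrix.mulVec_smul, smul_add, smul_sub]
    abel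

lemma ptTor_antisymm {n : ℕ} (L : OpField n) (x : Vec n) (m : ℕ) :
    ∀ u v : Vec n, ptTor L x m u v = -ptTor L x m v u := by
  induction m with
  | zero =>
    intro u v
    simp only [ptTor]
    abel
  | succ m ih =>
    intro u v
    simp only [ptTor, stepTor]
    rw [ih u v, ih (L x *ᵥ u) v, ih u, ih (L x *ᵥ u) (L x *ᵥ v)]
    simp only [Matrix.mulVec_neg]
    abel

lemma ptTor_self {n : ℕ} (L : OpField n) (x : Vec n) (m : ℕ) (u : Vec n) :
    ptTor L x m u u = 0 :=
  self_eq_neg.1 (ptTor_antisymm L x m u u)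

/-- The span of the first `k` standard basis vectors. The index is an integer, so that the
bound `A V_k ⊆ V_{k-1}` needs no truncation; the subspace is `0` for `k ≤ 0`. -/
def flag (n : ℕ) (k : ℤ) : Submodule ℝ (Vec n) where
  carrier := {v | ∀ i : Fin n, k ≤ (i : ℤ) → v i = 0}
  add_mem' := fun ha hb i hi => by simp [ha i hi, hb i hi]
  zero_mem' := fun _ _ => rfl
  smul_mem' := fun c v hv i hi => by simp [hv i hi]

lemma mem_flag {n : ℕ} {k : ℤ} {v : Vec n} :
    v ∈ flag n k ↔ ∀ i : Fin n, k ≤ (i : ℤ) → v i = 0 := Iff.rfl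

lemma flag_mono {n : ℕ} {k l : ℤ} (h : k ≤ l) : flag n k ≤ flag n l :=
  fun _ hv i hi => hv i (h.trans hi)

lemma eq_zero_of_mem_flag {n : ℕ} {k : ℤ} (hk : k ≤ 0) {v : Vec n} (hv : v ∈ flag n k) :
    v = 0 := by
  ext i
  exact hv i (by omega)

lemma StrictUpperTri.mulVec_mem_flag {n : ℕ} {A : Matrix (Fin n) (Fin n) ℝ}
    (hA : StrictUpperTri A) {k : ℤ} {v : Vec n} (hv : v ∈ flag n k) :
    A *ᵥ v ∈ flag n (k - 1) := by
  intro i hi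
  change ∑ j, A i j * v j = 0
  refine Finset.sum_eq_zero fun j _ => ?_
  rcases le_or_gt j i with h | h
  · simp [hA i j h]
  · have h' : (i : ℕ) < j := h
    simp [hv j (by omega)]

lemma stepTor_mem_flag {n : ℕ} {A : Matrix (Fin n) (Fin n) ℝ} (hA : StrictUpperTri A)
    {G : Vec n → Vec n → Vec n} {c : ℤ}
    (hG : ∀ (i j : ℤ) (u v : Vec n), u ∈ flag n i → v ∈ flag n j → G u v ∈ flag n (i + j - c))
    (i j : ℤ) (u v : Vec n) (hu : u ∈ flag n i) (hv : v ∈ flag n j) :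
    stepTor A G u v ∈ flag n (i + j - (c + 2)) := by
  have hu' := hA.mulVec_mem_flag hu
  have hv' := hA.mulVec_mem_flag hv
  refine sub_mem (sub_mem (add_mem ?_ ?_) ?_) ?_
  · exact flag_mono (by omega) (hA.mulVec_mem_flag (hA.mulVec_mem_flag (hG _ _ _ _ hu hv)))
  · exact flag_mono (by omega) (hG _ _ _ _ hu' hv')
  · exact flag_mono (by omega) (hA.mulVec_mem_flag (hG _ _ _ _ hu' hv))
  · exact flag_mono (by omega) (hA.mulVec_mem_flag (hG _ _ _ _ hu hv'))

/-- The half `D (A u) v - A (D u v)` of the pointwise Nijenhuis torsion maps `V_i × V_j` into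
`V_{i+j-3}`. -/
lemma half_mem_flag {n : ℕ} {L : OpField n} (hLt : ∀ x : Vec n, StrictUpperTri (L x))
    (x : Vec n) {i j : ℤ} {u v : Vec n} (hu : u ∈ flag n i) (hv : v ∈ flag n j) :
    dOp L x (L x *ᵥ u) *ᵥ v - L x *ᵥ (dOp L x u *ᵥ v) ∈ flag n (i + j - 3) := by
  have hd0 : dOp L x 0 = 0 := by
    ext
    simp [dOp]
  refine sub_mem ?_ ?_
  · -- The two bounds `u ∈ V_i` and `v ∈ V_j` add up only because `A u = 0` when `i ≤ 1`.
    rcases le_or_gt i 1 with hi | hi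
    · rw [eq_zero_of_mem_flag (by omega) ((hLt x).mulVec_mem_flag hu), hd0]
      simp
    · exact flag_mono (by omega) ((dOp_strictUpperTri hLt x _).mulVec_mem_flag hv)
  · rcases le_or_gt i 0 with hi | hi
    · rw [eq_zero_of_mem_flag hi hu, hd0]
      simp
    · exact flag_mono (by omega)
        ((hLt x).mulVec_mem_flag ((dOp_strictUpperTri hLt x _).mulVec_mem_flag hv))

lemma ptTor_mem_flag {n : ℕ} {L : OpField n} (hLt : ∀ x : Vec n, StrictUpperTri (L x))
    (x : Vec n) (m : ℕ) : ∀ (i j : ℤ) (u v : Vec n), u ∈ flag n i → v ∈ flag n j →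
      ptTor L x m u v ∈ flag n (i + j - (2 * m + 3)) := by
  induction m with
  | zero =>
    intro i j u v hu hv
    have h1 := half_mem_flag hLt x hu hv
    have h2 := half_mem_flag hLt x hv hu
    rw [add_comm j i] at h2
    have h : ptTor L x 0 u v = (dOp L x (L x *ᵥ u) *ᵥ v - L x *ᵥ (dOp L x u *ᵥ v))
        - (dOp L x (L x *ᵥ v) *ᵥ u - L x *ᵥ (dOp L x v *ᵥ u)) := by
      simp only [ptTor]
      abel
    rw [h]
    exact sub_mem h1 h2
  | succ m ih =>
    intro i j u v hu hv
    exact flag_mono (by push_cast; omega) (stepTor_mem_flag (hLt x) ih i j u v hu hv)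

lemma ptTor_eq_zero {n : ℕ} (hn : 2 ≤ n) {L : OpField n}
    (hLt : ∀ x : Vec n, StrictUpperTri (L x)) (x u v : Vec n) :
    ptTor L x (n - 2) u v = 0 := by
  have htop : ∀ w : Vec n, w ∈ flag n n := fun w i hi => by omega
  have hlow : ∀ w w' : Vec n, w' ∈ flag n (n - 1) → ptTor L x (n - 2) w w' = 0 :=
    fun w w' hw' =>
      eq_zero_of_mem_flag (by omega) (ptTor_mem_flag hLt x (n - 2) _ _ _ _ (htop w) hw')
  let l : Fin n := ⟨n - 1, by omega⟩
  have hmem : ∀ w : Vec n, w l = 0 → w ∈ flag n (n - 1) := by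
    intro w hw i hi
    have : i = l := Fin.ext (by simp only [l]; omega)
    rw [this, hw]
  by_cases hul : u l = 0
  · rw [ptTor_antisymm, hlow v u (hmem u hul), neg_zero]
  · -- Subtracting a multiple of `u` kills the last coordinate of `v`.
    have hv : v = (v - (v l / u l) • u) + (v l / u l) • u := by simp
    rw [hv, ptTor_add_smul, ptTor_self, smul_zero, add_zero]
    refine hlow _ _ (hmem _ ?_)
    simp [hul]

/-- for a strictly upper triangular operator field `L` on ℝⁿ, the
generalized Haantjes torsion of level `n - 1` (i.e. `genTor L (n - 2)`)
vanishes identically. -/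
theorem stmt_3 (n : ℕ) (hn : 2 ≤ n) (L : OpField n) (hL : SmoothOp L)
    (hLt : ∀ x : Vec n, StrictUpperTri (L x)) :
    ∀ ξ η : VF n, SmoothVF ξ → SmoothVF η →
      ∀ x : Vec n, genTor L (n - 2) ξ η x = 0 := by
  intro ξ η hξ hη x
  rw [genTor_eq_ptTor hL (n - 2) (hξ.differentiable (by simp)) (hη.differentiable (by simp))]
  exact ptTor_eq_zero hn hLt x (ξ x) (η x)
end

section
/- Let L be a smooth operator field on ℝⁿ such that at every point x the matrix L(x) is nilpotent and similar to the single n×n nilpotent Jordan block (equivalently L(x)ⁿ = 0 and rank L(x) = n − 1). Then L is locally reducible to strictly upper triangular form near a point p if and only if there is an open neighbourhood U of p on which each of the distributions Image L^k (k = 1, …, n − 1) is involutive, i.e. for all smooth vector fields ξ, η on U with ξ(x), η(x) ∈ Image(L(x)^k) for all x ∈ U, also [ξ, η](x) ∈ Image(L(x)^k) for all x ∈ U. -/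
/-!
Reducing `L` to strictly upper triangular form means finding coordinates in which the
distributions `Image L ^ k` become the coordinate flags `span (e₁, …, e_{n-k})`.

If such coordinates `φ` exist, the pushforward of `L` is strictly upper triangular and is still a
single nilpotent block, so the image of its `k`-th power is exactly a coordinate flag
(`range_pow_of_strictUpperTri`). Hence `Image L ^ k` is cut out by the equations
`dφ_m = 0`, `m ≥ n - k`, and such a distribution is involutive because second derivatives are
symmetric (`fderiv_lieB_apply_eq_zero`).

Conversely, choose a constant vector `v` with `L(p) ^ (n - 1) v ≠ 0`. Near `p` the vector fields
`X_i = L ^ (n - 1 - i) v` form a frame, and `X_0, …, X_j` span `Image L ^ (n - 1 - j)`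
(`mem_frameFlag_cyclicFrame`). Involutivity of all these distributions implies that the flow of
`X_i` preserves `span (X_0, …, X_j)` whenever `i ≤ j` (`flow_preserves_frameFlag`): in the frame,
the variational equation is linear with coefficients preserving the flag. Therefore the map
`t ↦ g_0^{t_0} (g_1^{t_1} (⋯ g_{n-1}^{t_{n-1}} (p)))`, where `g_i` is the flow of `X_i`, is a local
diffeomorphism whose `j`-th partial derivative lies in `span (X_0, …, X_j)`
(`exists_frame_chart`). This is a simultaneous Frobenius theorem for the whole flag. Since `L` maps
`span (X_0, …, X_j)` to `span (X_0, …, X_{j-1})`, it is strictly upper triangular in these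
coordinates.

The smoothness of a flow jointly in time and initial condition (`exists_smooth_flow`) is obtained
from the inverse function theorem in the Banach space of continuous curves: composition with a
smooth map is a smooth operation on curves (`contDiff_curveComp`), and the rescaled solution
`s ↦ g (t s, x)` on `[0, 1]` solves a fixed-point equation which depends smoothly on `(t, x)`.
-/

open Matrix

/-! ### Composition and integration operators on spaces of curves -/

section CurveComposition

open scoped ContDiff unitInterval Topology
variable {E F : Type} [NormedAddCommGroup E] [NormedSpace ℝ E] [NormedAddCommGroup F]
  [NormedSpace ℝ F]

/-- Pointwise evaluation of a continuous family of operators on a continuous curve. -/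
noncomputable def curveApply (E F : Type) [NormedAddCommGroup E] [NormedSpace ℝ E]
    [NormedAddCommGroup F] [NormedSpace ℝ F] :
    C(I, E →L[ℝ] F) →L[ℝ] C(I, E) →L[ℝ] C(I, F) :=
  LinearMap.mkContinuous₂ (E := C(I, E →L[ℝ] F)) (F := C(I, E)) (G := C(I, F))
    (LinearMap.mk₂ ℝ
      (fun (A : C(I, E →L[ℝ] F)) (h : C(I, E)) => (⟨fun s => A s (h s), by fun_prop⟩ : C(I, F)))
      (fun A B h => by ext s; simp) (fun c A h => by ext s; simp)
      (fun A g h => by ext s; simp) (fun c A h => by ext s; simp)) 1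
    (fun A h => by
      rw [ContinuousMap.norm_le _ (by positivity)]
      intro s
      calc ‖A s (h s)‖ ≤ ‖A s‖ * ‖h s‖ := (A s).le_opNorm _
        _ ≤ 1 * ‖A‖ * ‖h‖ := by
          rw [one_mul]
          gcongr
          · exact A.norm_coe_le_norm s
          · exact h.norm_coe_le_norm s)

@[simp] lemma curveApply_apply (A : C(I, E →L[ℝ] F)) (h : C(I, E)) (s : I) :
    curveApply E F A h s = A s (h s) := rfl

/-- Uniform continuity of `f'` on a ball containing the curve gives the remainder estimate. -/
lemma hasFDerivAt_curveComp [FiniteDimensional ℝ E] (f : C(E, F)) (f' : C(E, E →L[ℝ] F))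
    (hf : ∀ x, HasFDerivAt f (f' x) x) (u : C(I, E)) :
    HasFDerivAt (fun v : C(I, E) => f.comp v) (curveApply E F (f'.comp u)) u := by
  rw [hasFDerivAt_iff_isLittleO_nhds_zero, Asymptotics.isLittleO_iff]
  intro ε hε
  have hK : IsCompact (Metric.closedBall (0 : E) (‖u‖ + 1)) :=
    isCompact_closedBall _ _
  have huc := hK.uniformContinuousOn_of_continuous f'.continuous.continuousOn
  rw [Metric.uniformContinuousOn_iff] at huc
  obtain ⟨δ, hδ, H⟩ := huc ε hε
  have hpos : 0 < min δ 1 := lt_min hδ one_pos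
  filter_upwards [Metric.ball_mem_nhds (0 : C(I, E)) hpos] with h hh
  rw [mem_ball_zero_iff] at hh
  rw [ContinuousMap.norm_le _ (by positivity)]
  intro s
  have hs := h.norm_coe_le_norm s
  have hus := u.norm_coe_le_norm s
  have key := (convex_ball (u s) (min δ 1)).norm_image_sub_le_of_norm_hasFDerivWithin_le'
    (f := f) (f' := f') (φ := f' (u s)) (C := ε) (x := u s) (y := u s + h s)
    (fun x _ => (hf x).hasFDerivWithinAt) ?_ (Metric.mem_ball_self hpos) ?_
  · rw [add_sub_cancel_left] at key
    exact key.trans (mul_le_mul_of_nonneg_left hs hε.le)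
  · intro x hx
    rw [← dist_eq_norm]
    refine (H x ?_ (u s) ?_ ?_).le
    · rw [mem_closedBall_zero_iff]
      have : ‖x - u s‖ < 1 := by
        rw [← dist_eq_norm]; exact lt_of_lt_of_le hx (min_le_right _ _)
      have h2 : ‖x‖ ≤ ‖u s‖ + ‖x - u s‖ := by
        simpa using norm_add_le (u s) (x - u s)
      linarith
    · rw [mem_closedBall_zero_iff]; linarith
    · exact lt_of_lt_of_le hx (min_le_left _ _)
  · rw [mem_ball_iff_norm]; simpa using lt_of_le_of_lt hs hh

/-- The derivative of `f ∘ ·` is again a composition operator, with `f'` in place of `f`, so the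
order of differentiability can be raised one step at a time. -/
lemma contDiff_nat_curveComp [FiniteDimensional ℝ E] (m : ℕ) :
    ∀ (F : Type) [NormedAddCommGroup F] [NormedSpace ℝ F] (f : C(E, F)),
      ContDiff ℝ ∞ f → ContDiff ℝ m (fun v : C(I, E) => f.comp v) := by
  induction m with
  | zero =>
    intro F _ _ f hf
    rw [Nat.cast_zero, contDiff_zero]
    exact f.continuous_postcomp
  | succ m ih =>
    intro F _ _ f hf
    have hf' := contDiff_infty_iff_fderiv.1 hf
    have hd := hasFDerivAt_curveComp f ⟨fderiv ℝ f, hf'.2.continuous⟩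
      (fun x => (hf'.1 x).hasFDerivAt)
    rw [Nat.cast_add, Nat.cast_one, contDiff_succ_iff_fderiv]
    refine ⟨fun u => (hd u).differentiableAt, by simp, ?_⟩
    rw [funext fun u => (hd u).fderiv]
    exact (ContinuousLinearMap.contDiff (E := C(I, E →L[ℝ] F)) (F := C(I, E) →L[ℝ] C(I, F))
      (curveApply E F)).comp (ih (E →L[ℝ] F) ⟨fderiv ℝ f, hf'.2.continuous⟩ hf'.2)

/-- Left composition with a smooth map is a smooth map between spaces of continuous curves. -/
lemma contDiff_curveComp [FiniteDimensional ℝ E] (f : C(E, F)) (hf : ContDiff ℝ ∞ f) :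
    ContDiff ℝ ∞ (fun v : C(I, E) => f.comp v) :=
  contDiff_infty.2 fun m => contDiff_nat_curveComp m F f hf

/-- The primitive `s ↦ ∫₀ˢ u`, written as `s ∫₀¹ u (s r) dr` so that only the multiplication of
the unit interval is involved. -/
noncomputable def curvePrimitive (E : Type) [NormedAddCommGroup E] [NormedSpace ℝ E] :
    C(I, E) →L[ℝ] C(I, E) :=
  LinearMap.mkContinuous
    { toFun := fun u => ⟨fun s => (s : ℝ) • ∫ r : I, u (s * r), by
        have : Continuous fun s : I => ∫ r : I in Set.univ, u (s * r) :=
          continuous_parametric_integral_of_continuous (f := fun s r : I => u (s * r))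
            (by unfold Function.uncurry; fun_prop) isCompact_univ
        simp only [MeasureTheory.setIntegral_univ] at this
        fun_prop⟩
      map_add' := fun u v => by
        ext s
        simp only [ContinuousMap.add_apply, ContinuousMap.coe_mk]
        rw [MeasureTheory.integral_add, smul_add] <;>
        exact (Continuous.integrable_of_hasCompactSupport (by fun_prop)
          (HasCompactSupport.of_compactSpace _))
      map_smul' := fun c u => by
        ext s
        simp only [ContinuousMap.smul_apply, ContinuousMap.coe_mk, RingHom.id_apply]
        rw [MeasureTheory.integral_smul, smul_comm] } 1
    (fun u => by
      rw [ContinuousMap.norm_le _ (by positivity)]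
      intro s
      change ‖(s : ℝ) • ∫ r : I, u (s * r)‖ ≤ _
      have h1 : ‖∫ r : I, u (s * r)‖ ≤ ‖u‖ := by
        have := MeasureTheory.norm_integral_le_of_norm_le_const
          (μ := (MeasureTheory.volume : MeasureTheory.Measure I)) (f := fun r => u (s * r))
          (C := ‖u‖) (Filter.Eventually.of_forall fun r => u.norm_coe_le_norm _)
        simpa using this
      rw [norm_smul, Real.norm_of_nonneg s.2.1]
      exact mul_le_mul s.2.2 h1 (norm_nonneg _) zero_le_one)

lemma curvePrimitive_apply (u : C(I, E)) (s : I) :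
    curvePrimitive E u s = (s : ℝ) • ∫ r : I, u (s * r) := rfl

end CurveComposition

/-! ### Smooth local flows -/

section Flow

open scoped ContDiff unitInterval Topology

/-- The inverse function theorem for maps that are `C^∞` on an open set, with an inverse that is
`C^∞` on its whole domain. -/
lemma exists_smooth_local_inverse {E F : Type} [NormedAddCommGroup E] [NormedSpace ℝ E]
    [CompleteSpace E] [NormedAddCommGroup F] [NormedSpace ℝ F] {f : E → F} {U : Set E}
    (hU : IsOpen U) (hf : ContDiffOn ℝ ∞ f U) {a : E} (ha : a ∈ U) (e : E ≃L[ℝ] F)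
    (he : HasFDerivAt f (e : E →L[ℝ] F) a) :
    ∃ R : OpenPartialHomeomorph E F, (∀ x, R x = f x) ∧ a ∈ R.source ∧ R.source ⊆ U ∧
      ContDiffOn ℝ ∞ R.symm R.target := by
  have hfa : ContDiffAt ℝ ∞ f a := hf.contDiffAt (hU.mem_nhds ha)
  have hcont : ContinuousOn (fderiv ℝ f) U :=
    (hf.fderiv_of_isOpen (m := ∞) hU (by simp)).continuousOn
  have hinv : ∀ᶠ x in 𝓝 a, x ∈ U ∧ fderiv ℝ f x ∈
      Set.range (ContinuousLinearEquiv.toContinuousLinearMap : (E ≃L[ℝ] F) → (E →L[ℝ] F)) := by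
    refine (hU.eventually_mem ha).and ?_
    refine (hcont.continuousAt (hU.mem_nhds ha)).eventually_mem ?_
    rw [he.fderiv]
    exact e.nhds
  obtain ⟨V, hV, hVo, haV⟩ := eventually_nhds_iff.1 hinv
  let R₀ := hfa.toOpenPartialHomeomorph f he (by simp)
  have hR₀ : ∀ x, R₀ x = f x := fun x => rfl
  let R := R₀.restrOpen V hVo
  refine ⟨R, fun x => rfl, ⟨hfa.mem_toOpenPartialHomeomorph_source he (by simp), haV⟩,
    fun x hx => (hV x hx.2).1, fun y hy => ?_⟩
  have hx : R.symm y ∈ R.source := R.map_target hy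
  obtain ⟨e', he'⟩ := (hV _ hx.2).2
  have hfx : ContDiffAt ℝ ∞ f (R.symm y) := hf.contDiffAt (hU.mem_nhds (hV _ hx.2).1)
  refine (R.contDiffAt_symm (f₀' := e') hy ?_ hfx).contDiffWithinAt
  rw [he']
  exact (hfx.differentiableAt (by simp)).hasFDerivAt

/-- Local flow of a smooth vector field, smooth jointly in time and initial condition. -/
lemma exists_smooth_flow {E : Type} [NormedAddCommGroup E] [NormedSpace ℝ E]
    [FiniteDimensional ℝ E] (X : E → E) (hX : ContDiff ℝ ∞ X) (p : E) :
    ∃ ε > 0, ∃ g : ℝ × E → E,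
      ContDiffOn ℝ ∞ g (Set.Ioo (-ε) ε ×ˢ Metric.ball p ε) ∧
      (∀ x ∈ Metric.ball p ε, g (0, x) = x) ∧
      ∀ t ∈ Set.Ioo (-ε) ε, ∀ x ∈ Metric.ball p ε,
        HasDerivAt (fun s => g (s, x)) (X (g (t, x))) t := by
  have : CompleteSpace E := FiniteDimensional.complete ℝ E
  let Xc : C(E, E) := ⟨X, hX.continuous⟩
  -- `W u s` is the integral of `X ∘ u` from `0` to `s`; the rescaled integral curve is the solution
  -- of `u = κ x + t • W u`, and `G` is inverted to solve this equation near `(0, p)`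
  let W : C(I, E) → C(I, E) := fun u => curvePrimitive E (Xc.comp u)
  have hW : ContDiff ℝ ∞ W :=
    (ContinuousLinearMap.contDiff (E := C(I, E)) (F := C(I, E)) (curvePrimitive E)).comp
      (contDiff_curveComp Xc hX)
  let κ : E →L[ℝ] C(I, E) := ContinuousLinearMap.const ℝ I
  let G : (ℝ × E) × C(I, E) → (ℝ × E) × C(I, E) :=
    fun z => (z.1, z.2 - κ z.1.2 - z.1.1 • W z.2)
  have hκ : ContDiff ℝ ∞ κ := ContinuousLinearMap.contDiff (E := E) (F := C(I, E)) κ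
  have hG : ContDiff ℝ ∞ G := by
    refine contDiff_fst.prodMk ((contDiff_snd.sub (hκ.comp ?_)).sub
      (ContDiff.smul (f := fun z : (ℝ × E) × C(I, E) => z.1.1) ?_ (hW.comp contDiff_snd)))
    · exact contDiff_snd.comp contDiff_fst
    · exact contDiff_fst.comp contDiff_fst
  let z₀ : (ℝ × E) × C(I, E) := ((0, p), κ p)
  let B : (ℝ × E) →L[ℝ] C(I, E) :=
    -((ContinuousLinearMap.fst ℝ ℝ E).smulRight (W (κ p)) +
      κ.comp (ContinuousLinearMap.snd ℝ ℝ E))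
  let e := (ContinuousLinearEquiv.refl ℝ (ℝ × E)).skewProd
    (ContinuousLinearEquiv.refl ℝ C(I, E)) B
  have he : HasFDerivAt G (e : (ℝ × E) × C(I, E) →L[ℝ] (ℝ × E) × C(I, E)) z₀ := by
    have h1 : HasFDerivAt (fun z : (ℝ × E) × C(I, E) => z.1)
      (ContinuousLinearMap.fst ℝ (ℝ × E) C(I, E)) z₀ := hasFDerivAt_fst
    have h2 : HasFDerivAt (fun z : (ℝ × E) × C(I, E) => z.2)
      (ContinuousLinearMap.snd ℝ (ℝ × E) C(I, E)) z₀ := hasFDerivAt_snd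
    have h3 : HasFDerivAt W (fderiv ℝ W (κ p)) z₀.2 :=
      (hW.contDiffAt.differentiableAt (by simp)).hasFDerivAt
    have h4 := h1.prodMk ((h2.sub (κ.hasFDerivAt.comp z₀ h1.snd)).sub
      (h1.fst.smul (h3.comp z₀ h2)))
    refine h4.congr_fderiv ?_
    refine ContinuousLinearMap.ext fun z => Prod.ext rfl ?_
    change z.2 - κ z.1.2 - ((0 : ℝ) • fderiv ℝ W (κ p) z.2 + z.1.1 • W (κ p)) =
      z.2 + -(z.1.1 • W (κ p) + κ z.1.2)
    rw [zero_smul, zero_add]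
    abel
  obtain ⟨R, hRG, hzR, -, hRsm⟩ :=
    exists_smooth_local_inverse isOpen_univ hG.contDiffOn (Set.mem_univ z₀) e he
  obtain ⟨r, hr, hrR⟩ := Metric.isOpen_iff.1 R.open_source z₀ hzR
  have hGz₀ : R z₀ = ((0, p), 0) := by
    rw [hRG]
    change ((0, p), κ p - κ p - (0 : ℝ) • W (κ p)) = _
    simp
  have hev : ∀ᶠ y in 𝓝 (((0, p), 0) : (ℝ × E) × C(I, E)),
      y ∈ R.target ∧ R.symm y ∈ Metric.ball z₀ r := by
    rw [← hGz₀]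
    refine (R.open_target.eventually_mem (R.map_source hzR)).and ?_
    exact (R.tendsto_symm hzR).eventually_mem (Metric.ball_mem_nhds _ hr)
  obtain ⟨ε, hε, H⟩ := Metric.eventually_nhds_iff.1 hev
  let ι : ℝ × E → (ℝ × E) × C(I, E) := fun y => (y, 0)
  have hι : ContDiff ℝ ∞ ι := contDiff_id.prodMk contDiff_const
  let u : ℝ × E → C(I, E) := fun y => (R.symm (ι y)).2
  let Q : Set (ℝ × E) := Set.Ioo (-ε) ε ×ˢ Metric.ball p ε
  have hQ : ∀ y ∈ Q, ι y ∈ R.target ∧ R.symm (ι y) ∈ Metric.ball z₀ r := by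
    rintro ⟨t, x⟩ ⟨ht, hx⟩
    apply H
    simp only [ι, Prod.dist_eq, dist_self, Real.dist_eq, sub_zero, max_lt_iff]
    exact ⟨⟨abs_lt.2 ht, hx⟩, hε⟩
  have hsymm : ∀ y ∈ Q, R.symm (ι y) = (y, u y) := by
    intro y hy
    have := R.right_inv (hQ y hy).1
    rw [hRG] at this
    have h1 : (R.symm (ι y)).1 = y := congrArg Prod.fst this
    exact Prod.ext h1 rfl
  have hu : ∀ y ∈ Q, u y = κ y.2 + y.1 • W (u y) := by
    intro y hy
    have := R.right_inv (hQ y hy).1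
    rw [hRG, hsymm y hy] at this
    have h2 : u y - κ y.2 - y.1 • W (u y) = 0 := congrArg Prod.snd this
    rw [sub_sub, sub_eq_zero] at h2
    exact h2
  let g : ℝ × E → E := fun y => u y 1
  -- `u (t, x)` is `s ↦ g (s t, x)`: the curves `u (c t, x)` and `s ↦ u (t, x) (c s)` solve the same
  -- equation inside the domain of injectivity of `R`
  have hscale : ∀ t x, (t, x) ∈ Q → ∀ c : I, g ((c : ℝ) * t, x) = u (t, x) c := by
    intro t x hQ' c
    let v : C(I, E) := (u (t, x)).comp ⟨fun s => c * s, by fun_prop⟩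
    have hball := (hQ _ hQ').2
    rw [hsymm _ hQ'] at hball
    have hct : |(c : ℝ) * t| ≤ |t| := by
      rw [abs_mul, abs_of_nonneg c.2.1]
      exact mul_le_of_le_one_left (abs_nonneg _) c.2.2
    have hv : (((c : ℝ) * t, x), v) ∈ Metric.ball z₀ r := by
      rw [Metric.mem_ball] at hball ⊢
      simp only [z₀, Prod.dist_eq, max_lt_iff, Real.dist_eq, sub_zero] at hball ⊢
      refine ⟨⟨hct.trans_lt hball.1.1, hball.1.2⟩, ?_⟩
      refine lt_of_le_of_lt ?_ hball.2
      rw [ContinuousMap.dist_le dist_nonneg]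
      intro s
      exact ContinuousMap.dist_apply_le_dist (f := u (t, x)) (g := κ p) (c * s)
    have hGv : R (((c : ℝ) * t, x), v) = ι ((c : ℝ) * t, x) := by
      rw [hRG]
      refine Prod.ext rfl ?_
      change v - κ x - ((c : ℝ) * t) • W v = 0
      ext s
      have h1 : u (t, x) (c * s) = x + t • ((c * s : I) : ℝ) •
          ∫ r : I, X (u (t, x) (c * s * r)) := by
        conv_lhs => rw [hu _ hQ']
        rfl
      change u (t, x) (c * s) - x - ((c : ℝ) * t) • ((s : ℝ) •
        ∫ r : I, X (u (t, x) (c * (s * r)))) = 0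
      rw [h1]
      simp only [mul_assoc, smul_smul]
      rw [show t * ((c * s : I) : ℝ) = c * (t * s) by
        rw [show ((c * s : I) : ℝ) = c * s from rfl]; ring]
      abel
    have h2 := R.left_inv (hrR hv)
    rw [hGv] at h2
    have h3 : u ((c : ℝ) * t, x) = v := congrArg Prod.snd h2
    change u ((c : ℝ) * t, x) 1 = _
    rw [h3]
    change u (t, x) (c * 1) = _
    rw [mul_one]
  have hint : ∀ t x, (t, x) ∈ Q → g (t, x) = x + ∫ τ in (0 : ℝ)..t, X (g (τ, x)) := by
    intro t x hQ'
    have h1 : u (t, x) 1 = x + t • ((1 : I) : ℝ) • ∫ r : I, X (u (t, x) (1 * r)) := by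
      conv_lhs => rw [hu _ hQ']
      rfl
    have h2 : ∫ r : I, X (u (t, x) (1 * r)) = ∫ r : I, X (g ((r : ℝ) * t, x)) := by
      congr 1
      ext r
      rw [hscale t x hQ' r, one_mul]
    change u (t, x) 1 = _
    rw [h1, h2, MeasureTheory.integral_subtype measurableSet_Icc
      (fun r : ℝ => X (g (r * t, x))), MeasureTheory.integral_Icc_eq_integral_Ioc,
      ← intervalIntegral.integral_of_le zero_le_one]
    have h3 := intervalIntegral.smul_integral_comp_mul_right (a := 0) (b := 1)
      (fun τ => X (g (τ, x))) t
    rw [zero_mul, one_mul] at h3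
    rw [← h3]
    simp
  have hgsm : ContDiffOn ℝ ∞ g Q := by
    intro y hy
    have h1 : ContDiffAt ℝ ∞ R.symm (ι y) :=
      hRsm.contDiffAt (R.open_target.mem_nhds (hQ y hy).1)
    have h2 : ContDiffAt ℝ ∞ u y := contDiff_snd.contDiffAt.comp y (h1.comp y hι.contDiffAt)
    exact ((ContinuousLinearMap.contDiff (E := C(I, E)) (F := E)
      (ContinuousMap.evalCLM ℝ (1 : I))).contDiffAt.comp y h2).contDiffWithinAt
  refine ⟨ε, hε, g, hgsm, fun x hx => ?_, fun t ht x hx => ?_⟩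
  · rw [hint 0 x ⟨by simpa using hε, hx⟩]
    simp
  · have hc : ContinuousOn (fun τ => X (g (τ, x))) (Set.Ioo (-ε) ε) :=
      hX.continuous.comp_continuousOn (hgsm.continuousOn.comp (by fun_prop)
        (fun τ hτ => ⟨hτ, hx⟩))
    have h0 : (0 : ℝ) ∈ Set.Ioo (-ε) ε := by simpa using hε
    have hd := intervalIntegral.integral_hasDerivAt_right (a := 0) (b := t)
      (f := fun τ => X (g (τ, x)))
      ((hc.mono (Set.ordConnected_Ioo.uIcc_subset h0 ht)).intervalIntegrable)
      (hc.stronglyMeasurableAtFilter isOpen_Ioo t ht)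
      (hc.continuousAt (isOpen_Ioo.mem_nhds ht))
    refine (hd.const_add x).congr_of_eventuallyEq ?_
    filter_upwards [isOpen_Ioo.mem_nhds ht] with s hs
    exact hint s x ⟨hs, hx⟩
end Flow

/-! ### Frames and their flags -/

section Flag

open scoped ContDiff

variable {n : ℕ}

/-- The operator field whose columns are the vector fields `X i`. -/
noncomputable def frameMap (X : Fin n → VF n) (x : Vec n) : Vec n →L[ℝ] Vec n :=
  ∑ i, (ContinuousLinearMap.proj (R := ℝ) (φ := fun _ : Fin n => ℝ) i).smulRight (X i x)

lemma frameMap_apply (X : Fin n → VF n) (x a : Vec n) :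
    frameMap X x a = ∑ i, a i • X i x := by
  simp [frameMap]

/-- The span of the first `j + 1` coordinate vectors. -/
def coordFlag (j : Fin n) : Submodule ℝ (Vec n) where
  carrier := {a | ∀ m, j < m → a m = 0}
  add_mem' := fun ha hb m hm => by simp [ha m hm, hb m hm]
  zero_mem' := fun m _ => rfl
  smul_mem' := fun c a ha m hm => by simp [ha m hm]

lemma mem_coordFlag {j : Fin n} {a : Vec n} : a ∈ coordFlag j ↔ ∀ m, j < m → a m = 0 := Iff.rfl

/-- The distribution spanned by the first `j + 1` fields of the frame `X`. -/
noncomputable def frameFlag (X : Fin n → VF n) (j : Fin n) (x : Vec n) : Submodule ℝ (Vec n) :=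
  (coordFlag j).map (frameMap X x : Vec n →ₗ[ℝ] Vec n)

lemma field_mem_frameFlag (X : Fin n → VF n) {i j : Fin n} (h : i ≤ j) (x : Vec n) :
    X i x ∈ frameFlag X j x := by
  refine ⟨Pi.single i 1, fun m hm => ?_, ?_⟩
  · exact Pi.single_eq_of_ne (h.trans_lt hm).ne' _
  · change frameMap X x _ = _
    rw [frameMap_apply, Finset.sum_eq_single i] <;> simp +contextual

lemma frameFlag_mono (X : Fin n → VF n) {i j : Fin n} (h : i ≤ j) (x : Vec n) :
    frameFlag X i x ≤ frameFlag X j x :=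
  Submodule.map_mono fun _ ha m hm => ha m (h.trans_lt hm)

lemma contDiff_frameMap {X : Fin n → VF n} (hX : ∀ i, ContDiff ℝ ∞ (X i)) :
    ContDiff ℝ ∞ (frameMap X) :=
  ContDiff.sum fun i _ => (ContinuousLinearMap.smulRightL ℝ (Vec n) (Vec n)
    (ContinuousLinearMap.proj i)).contDiff.comp (hX i)

lemma fderiv_frameMap {X : Fin n → VF n} (hX : ∀ i, ContDiff ℝ ∞ (X i)) (x v a : Vec n) :
    fderiv ℝ (frameMap X) x v a = ∑ i, a i • fderiv ℝ (X i) x v := by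
  have h : HasFDerivAt (frameMap X) (∑ i, (ContinuousLinearMap.smulRightL ℝ (Vec n) (Vec n)
      (ContinuousLinearMap.proj i)).comp (fderiv ℝ (X i) x)) x :=
    HasFDerivAt.fun_sum fun i _ => ((ContinuousLinearMap.smulRightL ℝ (Vec n) (Vec n)
      (ContinuousLinearMap.proj i)).hasFDerivAt).comp x
        (((hX i).differentiable (by simp)) x).hasFDerivAt
  rw [h.fderiv]
  simp

end Flag

/-! ### The variational equation of a flow -/

section Variation

open scoped ContDiff Topology

/-- The variational equation: `t ↦ D_x g (t, x) w` satisfies the linearised equation. -/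
lemma hasDerivAt_variation {E : Type} [NormedAddCommGroup E] [NormedSpace ℝ E]
    {Y : E → E} (hY : ContDiff ℝ ∞ Y) {V : Set (ℝ × E)}
    (hV : IsOpen V) {g : ℝ × E → E} (hg : ContDiffOn ℝ ∞ g V)
    (hode : ∀ y ∈ V, HasDerivAt (fun s => g (s, y.2)) (Y (g y)) y.1)
    {t : ℝ} {x : E} (hy : (t, x) ∈ V) (w : E) :
    HasDerivAt (fun s => fderiv ℝ g (s, x) (0, w))
      (fderiv ℝ Y (g (t, x)) (fderiv ℝ g (t, x) (0, w))) t := by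
  have hgd : ∀ y ∈ V, DifferentiableAt ℝ g y := fun y hy =>
    (hg.contDiffAt (hV.mem_nhds hy)).differentiableAt (by simp)
  have hcurve : ∀ s : ℝ, HasDerivAt (fun s : ℝ => (s, x)) ((1 : ℝ), (0 : E)) s := fun s =>
    (hasDerivAt_id s).prodMk (hasDerivAt_const s x)
  have htime : ∀ y ∈ V, fderiv ℝ g y (1, 0) = Y (g y) := by
    rintro ⟨s, x'⟩ hs
    have h1 : HasDerivAt (fun s : ℝ => (s, x')) ((1 : ℝ), (0 : E)) s :=
      (hasDerivAt_id s).prodMk (hasDerivAt_const s x')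
    exact ((hgd _ hs).hasFDerivAt.comp_hasDerivAt s h1).unique (hode _ hs)
  have hat : ContDiffAt ℝ ∞ g (t, x) := hg.contDiffAt (hV.mem_nhds hy)
  have hd2 : DifferentiableAt ℝ (fderiv ℝ g) (t, x) :=
    (hat.fderiv_right (m := ∞) (by simp)).differentiableAt (by simp)
  have hsymm : IsSymmSndFDerivAt ℝ g (t, x) := hat.isSymmSndFDerivAt
    (by simpa using WithTop.coe_le_coe.2 (le_top : (2 : ℕ∞) ≤ ⊤))
  have h0 : HasDerivAt (fun s => fderiv ℝ g (s, x)) (fderiv ℝ (fderiv ℝ g) (t, x) (1, 0)) t :=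
    hd2.hasFDerivAt.comp_hasDerivAt t (hcurve t)
  have h1 := h0.clm_apply (hasDerivAt_const t ((0 : ℝ), w))
  refine h1.congr_deriv ?_
  rw [map_zero, add_zero, hsymm.eq (1, 0) (0, w)]
  have h2 : HasFDerivAt (fun y => fderiv ℝ g y (1, 0))
      ((fderiv ℝ (fderiv ℝ g) (t, x)).flip (1, 0)) (t, x) := by
    have := hd2.hasFDerivAt.clm_apply (hasFDerivAt_const ((1 : ℝ), (0 : E)) (t, x))
    refine this.congr_fderiv ?_
    ext <;> simp
  have h3 : HasFDerivAt (fun y => Y (g y))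
      ((fderiv ℝ Y (g (t, x))).comp (fderiv ℝ g (t, x))) (t, x) :=
    ((hY.differentiable (by simp)) _).hasFDerivAt.comp (t, x) (hgd _ hy).hasFDerivAt
  have h4 := (h3.congr_of_eventuallyEq
    (Filter.eventually_of_mem (hV.mem_nhds hy) htime)).unique h2
  exact (congrArg (fun T => T (0, w)) h4).symm

end Variation

/-! ### Flows preserving an involutive flag -/

section AdaptedFlow

open scoped ContDiff Topology

/-- A linear differential equation whose coefficients preserve the kernel of a projection `Q`
preserves that kernel: `Q a` solves the linear equation with coefficients `Q ∘ A`. -/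
lemma linear_ode_ker_invariant {E : Type} [NormedAddCommGroup E] [NormedSpace ℝ E]
    {ε : ℝ} (hε : 0 < ε) {K : ℝ} {A : ℝ → E →L[ℝ] E} (hK : ∀ t ∈ Set.Ioo (-ε) ε, ‖A t‖ ≤ K)
    (Q : E →L[ℝ] E) (hQ : ∀ v, Q (Q v) = Q v)
    (hA : ∀ t ∈ Set.Ioo (-ε) ε, ∀ v, Q v = 0 → Q (A t v) = 0)
    {a : ℝ → E} (ha : ∀ t ∈ Set.Ioo (-ε) ε, HasDerivAt a (A t (a t)) t) (h0 : Q (a 0) = 0) :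
    ∀ t ∈ Set.Ioo (-ε) ε, Q (a t) = 0 := by
  have h0mem : (0 : ℝ) ∈ Set.Ioo (-ε) ε := ⟨by linarith, hε⟩
  have hK0 : 0 ≤ K := (norm_nonneg _).trans (hK 0 h0mem)
  have key := ODE_solution_unique_of_mem_Ioo (v := fun t q => Q (A t q)) (s := fun _ => Set.univ)
    (K := ‖Q‖₊ * K.toNNReal) (f := fun t => Q (a t)) (g := fun _ => 0) (t₀ := 0)
    (a := -ε) (b := ε) ?_ h0mem ?_ ?_ (by simpa using h0)
  · exact fun t ht => key ht
  · intro t ht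
    refine LipschitzWith.lipschitzOnWith ?_
    refine ((Q.comp (A t)).lipschitz).weaken ?_
    refine (Q.opNNNorm_comp_le (A t)).trans ?_
    gcongr
    rw [← NNReal.coe_le_coe, Real.coe_toNNReal _ hK0]
    exact hK t ht
  · intro t ht
    refine ⟨?_, Set.mem_univ _⟩
    have h1 : HasDerivAt (fun s => Q (a s)) (Q (A t (a t))) t :=
      Q.hasFDerivAt.comp_hasDerivAt t (ha t ht)
    refine h1.congr_deriv ?_
    have h2 := hA t ht (a t - Q (a t)) (by rw [map_sub, hQ, sub_self])
    rw [map_sub, map_sub, sub_eq_zero] at h2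
    exact h2
  · intro t ht
    refine ⟨?_, Set.mem_univ _⟩
    simpa using hasDerivAt_const t (0 : E)


variable {n : ℕ}

/-- The projection of `ℝⁿ` killing the first `j + 1` coordinates; its kernel is `coordFlag j`. -/
noncomputable def flagProj (j : Fin n) : Vec n →L[ℝ] Vec n :=
  ContinuousLinearMap.pi fun m => if j < m then ContinuousLinearMap.proj m else 0

lemma flagProj_apply (j : Fin n) (v : Vec n) (m : Fin n) :
    flagProj j v m = if j < m then v m else 0 := by
  simp only [flagProj, ContinuousLinearMap.coe_pi']
  split_ifs <;> rfl

lemma flagProj_eq_zero {j : Fin n} {v : Vec n} : flagProj j v = 0 ↔ v ∈ coordFlag j := by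
  simp [funext_iff, flagProj_apply, mem_coordFlag]

lemma flagProj_flagProj (j : Fin n) (v : Vec n) : flagProj j (flagProj j v) = flagProj j v := by
  ext m
  simp only [flagProj_apply]
  split_ifs <;> rfl

/-- The matrix, with respect to the frame `X`, of `- [Y, ·]` acting on the frame fields. It is
meaningful where `frameMap X x` is invertible. -/
noncomputable def bracketMap (X : Fin n → VF n) (Y : VF n) (x : Vec n) : Vec n →L[ℝ] Vec n :=
  (frameMap X x).inverse.comp
    ((fderiv ℝ Y x).comp (frameMap X x) - fderiv ℝ (frameMap X) x (Y x))

lemma bracketMap_mem_coordFlag {X : Fin n → VF n} (hX : ∀ i, ContDiff ℝ ∞ (X i)) {Y : VF n}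
    {x : Vec n} (hx : (frameMap X x).IsInvertible) {j : Fin n}
    (hbr : ∀ l ≤ j, lieB Y (X l) x ∈ frameFlag X j x) {a : Vec n} (ha : a ∈ coordFlag j) :
    bracketMap X Y x a ∈ coordFlag j := by
  have h1 : (∑ l, a l • lieB Y (X l) x) ∈ frameFlag X j x := by
    refine Submodule.sum_mem _ fun l _ => ?_
    by_cases hl : l ≤ j
    · exact Submodule.smul_mem _ _ (hbr l hl)
    · rw [ha l (not_le.1 hl), zero_smul]
      exact Submodule.zero_mem _
  obtain ⟨b, hb, hbe⟩ := h1
  have h2 : bracketMap X Y x a = (frameMap X x).inverse (-(frameMap X x b)) := by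
    change (frameMap X x).inverse (fderiv ℝ Y x (frameMap X x a)
      - fderiv ℝ (frameMap X) x (Y x) a) = _
    congr 1
    change frameMap X x b = _ at hbe
    rw [hbe, frameMap_apply, fderiv_frameMap hX, map_sum, ← Finset.sum_sub_distrib,
      ← Finset.sum_neg_distrib]
    refine Finset.sum_congr rfl fun l _ => ?_
    rw [map_smul, ← smul_sub, lieB, ← smul_neg, neg_sub]
  rw [h2, map_neg, hx.inverse_apply_self]
  exact Submodule.neg_mem _ hb

lemma continuousAt_bracketMap {X : Fin n → VF n} (hX : ∀ i, ContDiff ℝ ∞ (X i)) {Y : VF n}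
    (hY : ContDiff ℝ ∞ Y) {x : Vec n} (hx : (frameMap X x).IsInvertible) :
    ContinuousAt (bracketMap X Y) x := by
  have hM := contDiff_frameMap hX
  have hinv : ContinuousAt (fun y => (frameMap X y).inverse) x :=
    (hx.contDiffAt_map_inverse (n := ∞)).continuousAt.comp hM.continuous.continuousAt
  have h1 : Continuous (fderiv ℝ Y) := hY.continuous_fderiv (by simp)
  have h2 : Continuous (fderiv ℝ (frameMap X)) := hM.continuous_fderiv (by simp)
  exact hinv.clm_comp ((h1.clm_comp hM.continuous).sub
    (h2.clm_apply hY.continuous)).continuousAt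

/-- The differential of the flow of `Y` preserves the distribution `frameFlag X j` as soon as
the brackets of `Y` with the fields spanning it stay inside. -/
lemma flow_preserves_frameFlag {X : Fin n → VF n} (hX : ∀ i, ContDiff ℝ ∞ (X i)) {Y : VF n}
    (hY : ContDiff ℝ ∞ Y) {O : Set (Vec n)} (hinv : ∀ x ∈ O, (frameMap X x).IsInvertible) {K : ℝ}
    (hK : ∀ x ∈ O, ‖bracketMap X Y x‖ ≤ K) {j : Fin n}
    (hbr : ∀ x ∈ O, ∀ l ≤ j, lieB Y (X l) x ∈ frameFlag X j x)
    {ε : ℝ} (hε : 0 < ε) {N : Set (Vec n)} (hN : IsOpen N) {g : ℝ × Vec n → Vec n}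
    (hg : ContDiffOn ℝ ∞ g (Set.Ioo (-ε) ε ×ˢ N)) (hg0 : ∀ x ∈ N, g (0, x) = x)
    (hode : ∀ t ∈ Set.Ioo (-ε) ε, ∀ x ∈ N, HasDerivAt (fun s => g (s, x)) (Y (g (t, x))) t)
    (hgO : ∀ t ∈ Set.Ioo (-ε) ε, ∀ x ∈ N, g (t, x) ∈ O)
    {t : ℝ} (ht : t ∈ Set.Ioo (-ε) ε) {x : Vec n} (hx : x ∈ N) {w : Vec n}
    (hw : w ∈ frameFlag X j x) :
    fderiv ℝ g (t, x) (0, w) ∈ frameFlag X j (g (t, x)) := by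
  have h0mem : (0 : ℝ) ∈ Set.Ioo (-ε) ε := ⟨by linarith, hε⟩
  have hVo : IsOpen (Set.Ioo (-ε) ε ×ˢ N) := isOpen_Ioo.prod hN
  have hM := contDiff_frameMap hX
  -- `a` is the coordinate vector of the transported vector `W` in the frame
  set W : ℝ → Vec n := fun s => fderiv ℝ g (s, x) (0, w) with hW
  set a : ℝ → Vec n := fun s => (frameMap X (g (s, x))).inverse (W s) with ha
  have hWd : ∀ s ∈ Set.Ioo (-ε) ε, HasDerivAt W (fderiv ℝ Y (g (s, x)) (W s)) s := fun s hs =>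
    hasDerivAt_variation hY hVo hg (fun y hy => hode y.1 hy.1 y.2 hy.2) (Set.mk_mem_prod hs hx) w
  have hMa : ∀ s ∈ Set.Ioo (-ε) ε, frameMap X (g (s, x)) (a s) = W s := fun s hs =>
    (hinv _ (hgO s hs x hx)).self_apply_inverse _
  have had : ∀ s ∈ Set.Ioo (-ε) ε,
      HasDerivAt a (bracketMap X Y (g (s, x)) (a s)) s := by
    intro s hs
    have hi := hinv _ (hgO s hs x hx)
    have hMd : HasDerivAt (fun r => frameMap X (g (r, x)))
        (fderiv ℝ (frameMap X) (g (s, x)) (Y (g (s, x)))) s :=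
      ((hM.differentiable (by simp)) _).hasFDerivAt.comp_hasDerivAt s (hode s hs x hx)
    have hid : DifferentiableAt ℝ (fun r => (frameMap X (g (r, x))).inverse) s :=
      DifferentiableAt.comp s (g := ContinuousLinearMap.inverse)
        (f := fun r => frameMap X (g (r, x)))
        ((hi.contDiffAt_map_inverse (n := ∞)).differentiableAt (by simp)) hMd.differentiableAt
    have had : DifferentiableAt ℝ a s := hid.clm_apply (hWd s hs).differentiableAt
    have h1 := hMd.clm_apply had.hasDerivAt
    have h2 : W =ᶠ[𝓝 s] fun r => frameMap X (g (r, x)) (a r) :=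
      Filter.eventually_of_mem (isOpen_Ioo.mem_nhds hs) fun r hr => (hMa r hr).symm
    have h3 := (h1.congr_of_eventuallyEq h2).unique (hWd s hs)
    refine had.hasDerivAt.congr_deriv ?_
    rw [← hMa s hs] at h3
    change _ = (frameMap X (g (s, x))).inverse
      (fderiv ℝ Y (g (s, x)) (frameMap X (g (s, x)) (a s)) -
        fderiv ℝ (frameMap X) (g (s, x)) (Y (g (s, x))) (a s))
    rw [← h3, add_sub_cancel_left, hi.inverse_apply_self]
  have h0 : W 0 = w := by
    have hgd : DifferentiableAt ℝ g (0, x) :=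
      (hg.contDiffAt (hVo.mem_nhds (Set.mk_mem_prod h0mem hx))).differentiableAt (by simp)
    have h1 : HasFDerivAt (fun y => g ((0 : ℝ), y)) _ x :=
      hgd.hasFDerivAt.comp x (hasFDerivAt_prodMk_right (0 : ℝ) x)
    have h2 : HasFDerivAt (fun y => g ((0 : ℝ), y)) (ContinuousLinearMap.id ℝ (Vec n)) x :=
      (hasFDerivAt_id x).congr_of_eventuallyEq
        (Filter.eventually_of_mem (hN.mem_nhds hx) hg0)
    have h3 := congrArg (fun T => T w) (h1.unique h2)
    simpa using h3
  have ha0 : a 0 ∈ coordFlag j := by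
    obtain ⟨b, hb, rfl⟩ := hw
    have : a 0 = b := by
      simp only [ha, h0, hg0 x hx]
      exact (hinv x (hg0 x hx ▸ hgO 0 h0mem x hx)).inverse_apply_self b
    rwa [this]
  have key := linear_ode_ker_invariant hε (K := K) (A := fun s => bracketMap X Y (g (s, x)))
    (fun s hs => hK _ (hgO s hs x hx)) (flagProj j) (flagProj_flagProj j)
    (fun s hs v hv => flagProj_eq_zero.2 (bracketMap_mem_coordFlag hX (hinv _ (hgO s hs x hx))
      (hbr _ (hgO s hs x hx)) (flagProj_eq_zero.1 hv))) had (flagProj_eq_zero.2 ha0) t ht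
  exact ⟨a t, flagProj_eq_zero.1 key, hMa t ht⟩

end AdaptedFlow

/-! ### Coordinates adapted to an involutive flag -/

section FrameChart

open scoped ContDiff Topology

variable {n : ℕ}

/-- The local flow `g` of `X i` near `p`, staying in `O` and preserving the flags of index at least
`i`; the flow equation is stated as a formula for the time derivative of `g`. -/
lemma exists_adapted_flow {X : Fin n → VF n} (hX : ∀ i, ContDiff ℝ ∞ (X i)) {O : Set (Vec n)}
    (hO : IsOpen O) {p : Vec n} (hp : p ∈ O) (hinv : ∀ x ∈ O, (frameMap X x).IsInvertible)
    (i : Fin n)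
    (hbr : ∀ x ∈ O, ∀ j, i ≤ j → ∀ l ≤ j, lieB (X i) (X l) x ∈ frameFlag X j x) :
    ∃ V : Set (ℝ × Vec n), IsOpen V ∧ (0, p) ∈ V ∧ ∃ g : ℝ × Vec n → Vec n,
      ContDiffOn ℝ ∞ g V ∧ g (0, p) = p ∧ (∀ y ∈ V, g y ∈ O) ∧
      (∀ y ∈ V, fderiv ℝ g y (1, 0) = X i (g y)) ∧
      (∀ w, fderiv ℝ g (0, p) (0, w) = w) ∧
      ∀ y ∈ V, ∀ j, i ≤ j → ∀ w ∈ frameFlag X j y.2,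
        fderiv ℝ g y (0, w) ∈ frameFlag X j (g y) := by
  obtain ⟨ε, hε, g, hg, hg0, hode⟩ := exists_smooth_flow (X i) (hX i) p
  have hVo : IsOpen (Set.Ioo (-ε) ε ×ˢ Metric.ball p ε) := isOpen_Ioo.prod Metric.isOpen_ball
  have h0 : ((0 : ℝ), p) ∈ Set.Ioo (-ε) ε ×ˢ Metric.ball p ε :=
    ⟨⟨by linarith, hε⟩, Metric.mem_ball_self hε⟩
  have hgp : g (0, p) = p := hg0 p h0.2
  -- a neighbourhood of `p` inside `O` on which the coefficients of the linear equation are bounded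
  have hO' : {x | x ∈ O ∧ ‖bracketMap X (X i) x‖ < ‖bracketMap X (X i) p‖ + 1} ∈ 𝓝 p :=
    Filter.inter_mem (hO.mem_nhds hp)
      ((continuousAt_bracketMap hX (hX i) (hinv p hp)).norm.eventually
        (gt_mem_nhds (lt_add_one _)))
  have hgc : ContinuousAt g (0, p) := (hg.contDiffAt (hVo.mem_nhds h0)).continuousAt
  have hpre := Filter.inter_mem (hgc.preimage_mem_nhds (by rwa [hgp])) (hVo.mem_nhds h0)
  obtain ⟨δ, hδ, hball⟩ := Metric.mem_nhds_iff.1 hpre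
  rw [← ball_prod_same, Real.ball_eq_Ioo, zero_sub, zero_add] at hball
  have hsub : Set.Ioo (-δ) δ ×ˢ Metric.ball p δ ⊆ Set.Ioo (-ε) ε ×ˢ Metric.ball p ε :=
    fun y hy => (hball hy).2
  have hδ0 : (0 : ℝ) ∈ Set.Ioo (-δ) δ := ⟨by linarith, hδ⟩
  have hball0 : ∀ x ∈ Metric.ball p δ, g (0, x) = x := fun x hx =>
    hg0 x (hsub (Set.mk_mem_prod hδ0 hx)).2
  refine ⟨_, isOpen_Ioo.prod Metric.isOpen_ball,
    Set.mk_mem_prod hδ0 (Metric.mem_ball_self hδ), g, hg.mono hsub, hgp,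
    fun y hy => (hball hy).1.1, ?_, ?_, ?_⟩
  · rintro ⟨s, x⟩ hy
    have hgd : DifferentiableAt ℝ g (s, x) :=
      (hg.contDiffAt (hVo.mem_nhds (hsub hy))).differentiableAt (by simp)
    have h1 : HasDerivAt (fun s : ℝ => (s, x)) ((1 : ℝ), (0 : Vec n)) s :=
      (hasDerivAt_id s).prodMk (hasDerivAt_const s x)
    exact (hgd.hasFDerivAt.comp_hasDerivAt s h1).unique (hode s (hsub hy).1 x (hsub hy).2)
  · intro w
    have hgd : DifferentiableAt ℝ g (0, p) :=
      (hg.contDiffAt (hVo.mem_nhds h0)).differentiableAt (by simp)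
    have h1 : HasFDerivAt (fun y => g ((0 : ℝ), y)) _ p :=
      hgd.hasFDerivAt.comp p (hasFDerivAt_prodMk_right (0 : ℝ) p)
    have h2 : HasFDerivAt (fun y => g ((0 : ℝ), y)) (ContinuousLinearMap.id ℝ (Vec n)) p :=
      (hasFDerivAt_id p).congr_of_eventuallyEq
        (Filter.eventually_of_mem (Metric.isOpen_ball.mem_nhds h0.2) hg0)
    have h3 := congrArg (fun T => T w) (h1.unique h2)
    simpa using h3
  · rintro ⟨s, x⟩ hy j hj w hw
    exact flow_preserves_frameFlag hX (hX i)
      (O := {x | x ∈ O ∧ ‖bracketMap X (X i) x‖ < ‖bracketMap X (X i) p‖ + 1})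
      (fun x hx => hinv x hx.1) (fun x hx => hx.2.le) (fun x hx => hbr x hx.1 j hj) hδ
      Metric.isOpen_ball (hg.mono hsub) hball0
      (fun t ht x hx => hode t (hsub (Set.mk_mem_prod ht hx)).1 x (hsub (Set.mk_mem_prod ht hx)).2)
      (fun t ht x hx => (hball (Set.mk_mem_prod ht hx)).1) hy.1 hy.2 hw

/-- Composing the flows of `X m, …, X (n - 1)`, the flow of the last field being applied first.
The partial derivatives in the first `m` variables, which are not used, vanish. -/
lemma exists_composed_flows {X : Fin n → VF n} (hX : ∀ i, ContDiff ℝ ∞ (X i)) {O : Set (Vec n)}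
    (hO : IsOpen O) {p : Vec n} (hp : p ∈ O) (hinv : ∀ x ∈ O, (frameMap X x).IsInvertible)
    (hbr : ∀ x ∈ O, ∀ j, ∀ i ≤ j, ∀ l ≤ j, lieB (X i) (X l) x ∈ frameFlag X j x)
    (m : ℕ) (hm : m ≤ n) :
    ∃ N : Set (Vec n), IsOpen N ∧ 0 ∈ N ∧ ∃ Ψ : Vec n → Vec n,
      ContDiffOn ℝ ∞ Ψ N ∧ Ψ 0 = p ∧ (∀ t ∈ N, Ψ t ∈ O) ∧
      (∀ t ∈ N, ∀ j : Fin n, m ≤ j → fderiv ℝ Ψ t (Pi.single j 1) ∈ frameFlag X j (Ψ t)) ∧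
      (∀ t ∈ N, ∀ j : Fin n, (j : ℕ) < m → fderiv ℝ Ψ t (Pi.single j 1) = 0) ∧
      ∀ j : Fin n, m ≤ j → fderiv ℝ Ψ 0 (Pi.single j 1) = X j p := by
  induction hm using Nat.decreasingInduction with
  | self =>
    refine ⟨Set.univ, isOpen_univ, Set.mem_univ _, fun _ => p, contDiffOn_const, rfl,
      fun _ _ => hp, fun t _ j hj => absurd j.2 (not_lt.2 hj), fun t _ j _ => by simp,
      fun j hj => absurd j.2 (not_lt.2 hj)⟩
  | of_succ m hm ih =>
    obtain ⟨N, hN, h0N, Ψ, hΨ, hΨ0, hΨO, hflag, hzero, hat0⟩ := ih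
    obtain ⟨V, hV, h0V, g, hg, hg0, hgO, htime, hspace, hpres⟩ :=
      exists_adapted_flow hX hO hp hinv ⟨m, hm⟩
        fun x hx j hij l hl => hbr x hx j _ hij l hl
    set i : Fin n := ⟨m, hm⟩ with hi
    set pr : Vec n →L[ℝ] ℝ := ContinuousLinearMap.proj i with hpr
    have hpair : ContDiffOn ℝ ∞ (fun t : Vec n => (pr t, Ψ t)) N :=
      (pr.contDiff.contDiffOn).prodMk hΨ
    have hN' : IsOpen (N ∩ (fun t : Vec n => (pr t, Ψ t)) ⁻¹' V) :=
      hpair.continuousOn.isOpen_inter_preimage hN hV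
    have hpair0 : ((pr 0, Ψ 0) : ℝ × Vec n) = (0, p) := by rw [map_zero, hΨ0]
    have hderiv : ∀ t ∈ N ∩ (fun t : Vec n => (pr t, Ψ t)) ⁻¹' V, ∀ v : Vec n,
        fderiv ℝ (fun t => g (pr t, Ψ t)) t v =
          v i • X i (g (pr t, Ψ t)) + fderiv ℝ g (pr t, Ψ t) (0, fderiv ℝ Ψ t v) := by
      intro t ht v
      have h1 : HasFDerivAt Ψ (fderiv ℝ Ψ t) t :=
        ((hΨ.contDiffAt (hN.mem_nhds ht.1)).differentiableAt (by simp)).hasFDerivAt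
      have h2 : HasFDerivAt g (fderiv ℝ g (pr t, Ψ t)) (pr t, Ψ t) :=
        ((hg.contDiffAt (hV.mem_nhds ht.2)).differentiableAt (by simp)).hasFDerivAt
      have h3 : HasFDerivAt (fun t => g (pr t, Ψ t)) _ t :=
        h2.comp t (pr.hasFDerivAt.prodMk h1)
      rw [h3.fderiv, ← htime _ ht.2, ← map_smul, ← map_add]
      change fderiv ℝ g (pr t, Ψ t) (v i, fderiv ℝ Ψ t v) = _
      congr 1
      simp
    have h0mem : (0 : Vec n) ∈ N ∩ (fun t : Vec n => (pr t, Ψ t)) ⁻¹' V :=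
      ⟨h0N, by rw [Set.mem_preimage, hpair0]; exact h0V⟩
    refine ⟨_, hN', h0mem, fun t => g (pr t, Ψ t), ?_, ?_, fun t ht => hgO _ ht.2, ?_, ?_, ?_⟩
    · exact hg.comp (hpair.mono Set.inter_subset_left) fun t ht => ht.2
    · change g (pr 0, Ψ 0) = p
      rw [hpair0, hg0]
    · intro t ht j hj
      rw [hderiv t ht]
      rcases hj.eq_or_lt with hj | hj
      · have hij : i = j := Fin.ext hj
        rw [← hij, hzero t ht.1 i (Nat.lt_succ_self m), Pi.single_eq_same, one_smul]
        change _ + fderiv ℝ g (pr t, Ψ t) 0 ∈ _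
        rw [map_zero, add_zero]
        exact field_mem_frameFlag X le_rfl _
      · have hij : i < j := hj
        rw [Pi.single_eq_of_ne hij.ne, zero_smul, zero_add]
        exact hpres _ ht.2 j hij.le _ (hflag t ht.1 j hj)
    · intro t ht j hj
      have hij : j < i := hj
      rw [hderiv t ht, hzero t ht.1 j (hj.trans (Nat.lt_succ_self m)),
        Pi.single_eq_of_ne hij.ne', zero_smul, zero_add]
      exact map_zero _
    · intro j hj
      rw [hderiv 0 h0mem, hpair0, hspace, hg0]
      rcases hj.eq_or_lt with hj | hj
      · have hij : i = j := Fin.ext hj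
        rw [← hij, hzero 0 h0N i (Nat.lt_succ_self m), Pi.single_eq_same, one_smul, add_zero]
      · have hij : i < j := hj
        rw [Pi.single_eq_of_ne hij.ne, zero_smul, zero_add, hat0 j hj]

/-- A frame whose flags `frameFlag X j` are all involutive admits coordinates whose `j`-th
coordinate field lies in `frameFlag X j` for every `j`. -/
theorem exists_frame_chart {X : Fin n → VF n} (hX : ∀ i, ContDiff ℝ ∞ (X i)) {O : Set (Vec n)}
    (hO : IsOpen O) {p : Vec n} (hp : p ∈ O) (hinv : ∀ x ∈ O, (frameMap X x).IsInvertible)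
    (hbr : ∀ x ∈ O, ∀ j, ∀ i ≤ j, ∀ l ≤ j, lieB (X i) (X l) x ∈ frameFlag X j x) :
    ∃ R : OpenPartialHomeomorph (Vec n) (Vec n), p ∈ R.target ∧ R.target ⊆ O ∧
      ContDiffOn ℝ ∞ R R.source ∧ ContDiffOn ℝ ∞ R.symm R.target ∧
      ∀ t ∈ R.source, ∀ j, fderiv ℝ R t (Pi.single j 1) ∈ frameFlag X j (R t) := by
  obtain ⟨N, hN, h0N, Ψ, hΨ, hΨ0, hΨO, hflag, -, hat0⟩ :=
    exists_composed_flows hX hO hp hinv hbr 0 (Nat.zero_le n)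
  obtain ⟨e, he⟩ := hinv p hp
  have hd : HasFDerivAt Ψ (e : Vec n →L[ℝ] Vec n) 0 := by
    have h1 := ((hΨ.contDiffAt (hN.mem_nhds h0N)).differentiableAt (by simp)).hasFDerivAt
    refine h1.congr_fderiv ?_
    rw [he]
    refine ContinuousLinearMap.coe_injective (LinearMap.pi_ext' fun j => LinearMap.ext_ring ?_)
    change fderiv ℝ Ψ 0 (Pi.single j 1) = frameMap X p (Pi.single j 1)
    rw [hat0 j (Nat.zero_le _), frameMap_apply, Finset.sum_eq_single j] <;> simp +contextual
  obtain ⟨R, hR, h0R, hRN, hRs⟩ := exists_smooth_local_inverse hN hΨ h0N e hd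
  have hRΨ : ⇑R = Ψ := funext hR
  refine ⟨R, ?_, ?_, ?_, hRs, ?_⟩
  · have := R.map_source h0R
    rwa [hR, hΨ0] at this
  · intro x hx
    rw [← R.right_inv hx, hR]
    exact hΨO _ (hRN (R.map_target hx))
  · rw [hRΨ]
    exact hΨ.mono hRN
  · intro t ht j
    rw [hRΨ]
    exact hflag t (hRN ht) j (Nat.zero_le _)

end FrameChart

/-! ### The cyclic frame of a nilpotent operator field -/

section CyclicFrame

open scoped ContDiff

variable {n : ℕ}

/-- `f ^ k` maps `ker f ^ (k + 1)` into the line `ker f`, with kernel `ker f ^ k`. -/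
lemma finrank_ker_pow_le {E : Type} [AddCommGroup E] [Module ℝ E] [FiniteDimensional ℝ E]
    (f : Module.End ℝ E) (hf : Module.finrank ℝ (LinearMap.ker f) ≤ 1) (k : ℕ) :
    Module.finrank ℝ (LinearMap.ker (f ^ k)) ≤ k := by
  induction k with
  | zero => simp [Module.End.one_eq_id]
  | succ k ih =>
    set g : LinearMap.ker (f ^ (k + 1)) →ₗ[ℝ] E := (f ^ k).domRestrict _ with hg
    have h1 := LinearMap.finrank_range_add_finrank_ker g
    have h2 : LinearMap.range g ≤ LinearMap.ker f := by
      rintro _ ⟨⟨x, hx⟩, rfl⟩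
      rw [LinearMap.mem_ker, pow_succ', Module.End.mul_apply] at hx
      exact hx
    have h3 : Module.finrank ℝ (LinearMap.ker g) ≤ Module.finrank ℝ (LinearMap.ker (f ^ k)) := by
      rw [← Submodule.finrank_map_subtype_eq]
      refine Submodule.finrank_mono ?_
      rintro _ ⟨x, hx, rfl⟩
      exact hx
    have h4 := Submodule.finrank_mono h2
    omega

lemma exists_pow_mulVec_ne_zero {A : Matrix (Fin n) (Fin n) ℝ} (hn : 0 < n)
    (hA : A.rank = n - 1) : ∃ v : Vec n, (A ^ (n - 1)) *ᵥ v ≠ 0 := by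
  by_contra! h
  have h1 := LinearMap.finrank_range_add_finrank_ker (Matrix.toLin' A)
  have h2 : Module.finrank ℝ (LinearMap.range (Matrix.toLin' A)) = n - 1 := hA
  rw [h2, Module.finrank_fin_fun] at h1
  have h3 := finrank_ker_pow_le (Matrix.toLin' A) (by omega) (n - 1)
  have h4 : LinearMap.ker (Matrix.toLin' A ^ (n - 1)) = ⊤ := by
    rw [← Matrix.toLin'_pow]
    exact LinearMap.ker_eq_top.2 (LinearMap.ext h)
  rw [h4, finrank_top, Module.finrank_fin_fun] at h3
  omega

/-- The frame `L ^ (n - 1) v, …, L v, v` generated by a constant vector `v`. -/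
noncomputable def cyclicFrame (L : OpField n) (v : Vec n) (i : Fin n) : VF n :=
  fun x => (L x ^ (n - 1 - (i : ℕ))) *ᵥ v

lemma contDiff_cyclicFrame {L : OpField n} (hL : SmoothOp L) (v : Vec n) (i : Fin n) :
    ContDiff ℝ ∞ (cyclicFrame L v i) := by
  have h : ∀ k : ℕ, ContDiff ℝ ∞ (fun x => (L x ^ k) *ᵥ v) := by
    intro k
    induction k with
    | zero => simpa using contDiff_const
    | succ k ih =>
      simp_rw [pow_succ', ← Matrix.mulVec_mulVec]
      rw [contDiff_pi]
      intro m
      simp only [Matrix.mulVec, dotProduct]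
      exact ContDiff.sum fun l _ => (hL m l).mul (contDiff_pi.1 ih l)
  exact h _

lemma cyclicFrame_injective {L : OpField n} {v x : Vec n} (hn : L x ^ n = 0)
    (hv : (L x ^ (n - 1)) *ᵥ v ≠ 0) : Function.Injective (frameMap (cyclicFrame L v) x) := by
  rw [injective_iff_map_eq_zero]
  intro a ha
  by_contra hne
  -- apply `L ^ m` to the relation, where `m` is the last index with a nonzero coefficient
  have hex : (Finset.univ.filter fun i => a i ≠ 0).Nonempty := by
    obtain ⟨i, hi⟩ := Function.ne_iff.1 hne
    exact ⟨i, by simpa using hi⟩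
  set m := (Finset.univ.filter fun i => a i ≠ 0).max' hex with hm
  have ham : a m ≠ 0 := by simpa using Finset.max'_mem _ hex
  have hlast : ∀ i, m < i → a i = 0 := by
    intro i hi
    by_contra h
    exact absurd (Finset.le_max' _ i (by simpa using h)) (not_le.2 hi)
  have h1 : (L x ^ (m : ℕ)) *ᵥ (frameMap (cyclicFrame L v) x a)
      = a m • (L x ^ (n - 1)) *ᵥ v := by
    rw [frameMap_apply, Matrix.mulVec_sum, Finset.sum_eq_single m]
    · rw [Matrix.mulVec_smul, cyclicFrame, Matrix.mulVec_mulVec, ← pow_add]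
      congr 4
      omega
    · intro i _ hi
      rcases lt_or_gt_of_ne hi with h | h
      · rw [Matrix.mulVec_smul, cyclicFrame, Matrix.mulVec_mulVec, ← pow_add,
          pow_eq_zero_of_le (by omega) hn, Matrix.zero_mulVec, smul_zero]
      · rw [hlast i h, zero_smul, Matrix.mulVec_zero]
    · simp
  rw [ha, Matrix.mulVec_zero] at h1
  exact (smul_ne_zero ham hv) h1.symm

lemma frameMap_isInvertible {X : Fin n → VF n} {x : Vec n}
    (h : Function.Injective (frameMap X x)) : (frameMap X x).IsInvertible :=
  ⟨(LinearEquiv.ofInjectiveEndo (frameMap X x : Vec n →ₗ[ℝ] Vec n) h).toContinuousLinearEquiv,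
    by ext; rfl⟩

lemma cyclicFrame_mem_range (L : OpField n) (v x : Vec n) {i j : Fin n} (hij : i ≤ j) :
    cyclicFrame L v i x ∈ Set.range (L x ^ (n - 1 - (j : ℕ))).mulVec := by
  refine ⟨(L x ^ ((j : ℕ) - i)) *ᵥ v, ?_⟩
  rw [Matrix.mulVec_mulVec, ← pow_add, cyclicFrame]
  congr 2
  have : (i : ℕ) ≤ j := hij
  omega

/-- The flag of the cyclic frame consists of the images of the powers of `L`. -/
lemma mem_frameFlag_cyclicFrame {L : OpField n} {v x : Vec n} (hn : L x ^ n = 0)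
    (hv : (L x ^ (n - 1)) *ᵥ v ≠ 0) {j : Fin n} {w : Vec n} :
    w ∈ frameFlag (cyclicFrame L v) j x ↔ w ∈ Set.range (L x ^ (n - 1 - (j : ℕ))).mulVec := by
  constructor
  · rintro ⟨a, ha, rfl⟩
    change frameMap (cyclicFrame L v) x a ∈ _
    rw [frameMap_apply]
    change _ ∈ (LinearMap.range (L x ^ (n - 1 - (j : ℕ))).mulVecLin : Set (Vec n))
    refine Submodule.sum_mem _ fun i _ => ?_
    by_cases hij : i ≤ j
    · exact Submodule.smul_mem _ _ (cyclicFrame_mem_range L v x hij)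
    · rw [ha i (not_le.1 hij), zero_smul]
      exact Submodule.zero_mem _
  · rintro ⟨u, rfl⟩
    obtain ⟨a, rfl⟩ := (frameMap_isInvertible (cyclicFrame_injective hn hv)).bijective.2 u
    rw [frameMap_apply, Matrix.mulVec_sum]
    refine Submodule.sum_mem _ fun i _ => ?_
    rw [Matrix.mulVec_smul, cyclicFrame, Matrix.mulVec_mulVec, ← pow_add]
    refine Submodule.smul_mem _ _ ?_
    by_cases hij : n - 1 - (j : ℕ) ≤ i
    · refine frameFlag_mono _ (i := ⟨i - (n - 1 - j), by omega⟩) (by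
        rw [Fin.le_def]; change (i : ℕ) - (n - 1 - j) ≤ j; omega) x ?_
      convert field_mem_frameFlag (cyclicFrame L v) le_rfl x using 1
      rw [cyclicFrame]
      congr 2
      change _ = n - 1 - ((i : ℕ) - (n - 1 - j))
      omega
    · rw [pow_eq_zero_of_le (by omega) hn, Matrix.zero_mulVec]
      exact Submodule.zero_mem _

/-- An injective endomorphism of `ℝⁿ` preserving a coordinate flag also reflects it. -/
lemma mem_coordFlag_of_map {T : Vec n →ₗ[ℝ] Vec n} (hT : Function.Injective T) {j : Fin n}
    (hj : ∀ a ∈ coordFlag j, T a ∈ coordFlag j) {a : Vec n} (ha : T a ∈ coordFlag j) :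
    a ∈ coordFlag j := by
  have h1 : Function.Injective (T.restrict hj) := fun x y hxy =>
    Subtype.ext (hT (congrArg Subtype.val hxy))
  obtain ⟨b, hb⟩ := (LinearMap.injective_iff_surjective.1 h1) ⟨T a, ha⟩
  have h2 : T b = T a := congrArg Subtype.val hb
  rw [← hT h2]
  exact b.2

lemma map_mem_coordFlag {T : Vec n →ₗ[ℝ] Vec n}
    (h : ∀ i, T (Pi.single i 1) ∈ coordFlag i) {j : Fin n} {a : Vec n} (ha : a ∈ coordFlag j) :
    T a ∈ coordFlag j := by
  rw [← Finset.univ_sum_single a, map_sum]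
  refine Submodule.sum_mem _ fun i _ => ?_
  rw [show (Pi.single i (a i) : Vec n) = a i • Pi.single i 1 by
    rw [← Pi.single_smul, smul_eq_mul, mul_one], map_smul]
  by_cases hij : i ≤ j
  · exact Submodule.smul_mem _ _ fun m hm => h i m (hij.trans_lt hm)
  · rw [ha i (not_le.1 hij), zero_smul]
    exact Submodule.zero_mem _

/-- For a strictly upper triangular single nilpotent Jordan block, the images of the powers are
the coordinate flags. -/
lemma range_pow_of_strictUpperTri {A : Matrix (Fin n) (Fin n) ℝ} (hA : StrictUpperTri A)
    (hn : A ^ n = 0) (hr : A.rank = n - 1) (j : Fin n) (w : Vec n) :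
    w ∈ Set.range (A ^ (n - 1 - (j : ℕ))).mulVec ↔ w ∈ coordFlag j := by
  obtain ⟨v, hv⟩ := exists_pow_mulVec_ne_zero j.pos hr
  set X := cyclicFrame (fun _ : Vec n => A) v with hX
  -- `A ^ k` kills the last `k` coordinates, so the frame generated by `v` is upper triangular
  have hpow : ∀ k : ℕ, ∀ m : Fin n, n ≤ k + m → ((A ^ k) *ᵥ v) m = 0 := by
    intro k
    induction k with
    | zero => intro m hm; omega
    | succ k ih =>
      intro m hm
      rw [pow_succ', ← Matrix.mulVec_mulVec]
      change ∑ l, A m l * ((A ^ k) *ᵥ v) l = 0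
      refine Finset.sum_eq_zero fun l _ => ?_
      by_cases hl : l ≤ m
      · rw [hA m l hl, zero_mul]
      · rw [ih l (by have : (m : ℕ) < l := not_le.1 hl
                     omega), mul_zero]
  have hinj := cyclicFrame_injective (L := fun _ => A) (x := 0) hn hv
  have hpres : ∀ i : Fin n, ∀ a ∈ coordFlag i, frameMap X 0 a ∈ coordFlag i := fun i a ha =>
    map_mem_coordFlag (T := (frameMap X 0 : Vec n →ₗ[ℝ] Vec n)) (fun l m hm => by
      have h1 : frameMap X 0 (Pi.single l 1) = X l 0 := by
        rw [frameMap_apply, Finset.sum_eq_single l] <;> simp +contextual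
      change frameMap X 0 (Pi.single l 1) m = 0
      rw [h1]
      refine hpow _ m ?_
      have : (l : ℕ) < m := hm
      omega) ha
  rw [← mem_frameFlag_cyclicFrame (L := fun _ => A) (x := 0) hn hv]
  constructor
  · rintro ⟨a, ha, rfl⟩
    exact hpres j a ha
  · intro hw
    obtain ⟨a, rfl⟩ := (frameMap_isInvertible hinj).bijective.2 w
    exact ⟨a, mem_coordFlag_of_map (T := (frameMap X 0 : Vec n →ₗ[ℝ] Vec n)) hinj (hpres j) hw,
      rfl⟩

end CyclicFrame

/-! ### Reduction to strictly upper triangular form -/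

section Reduction

open scoped ContDiff

variable {n : ℕ}

lemma jacobianMatrix_mulVec (f : VF n) (x v : Vec n) :
    jacobianMatrix f x *ᵥ v = fderiv ℝ f x v := by
  have h : Matrix.toLin' (jacobianMatrix f x) = (fderiv ℝ f x : Vec n →ₗ[ℝ] Vec n) := by
    refine LinearMap.pi_ext' fun j => LinearMap.ext_ring ?_
    change jacobianMatrix f x *ᵥ Pi.single j 1 = fderiv ℝ f x (Pi.single j 1)
    rw [Matrix.mulVec_single_one]
    rfl
  exact congrArg (fun T => T v) h

lemma jacobianMatrix_mul_eq_one {f g : VF n} {W : Set (Vec n)} (hW : IsOpen W) {y : Vec n}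
    (hy : y ∈ W) (hf : DifferentiableAt ℝ f (g y)) (hg : DifferentiableAt ℝ g y)
    (h : ∀ z ∈ W, f (g z) = z) : jacobianMatrix f (g y) * jacobianMatrix g y = 1 := by
  have h1 : HasFDerivAt (fun z => f (g z)) ((fderiv ℝ f (g y)).comp (fderiv ℝ g y)) y :=
    hf.hasFDerivAt.comp y hg.hasFDerivAt
  have h2 : HasFDerivAt (fun z => f (g z)) (ContinuousLinearMap.id ℝ (Vec n)) y :=
    (hasFDerivAt_id y).congr_of_eventuallyEq (Filter.eventually_of_mem (hW.mem_nhds hy) h)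
  refine Matrix.ext_of_mulVec_single fun j => ?_
  rw [← Matrix.mulVec_mulVec, jacobianMatrix_mulVec, jacobianMatrix_mulVec, Matrix.one_mulVec]
  exact congrArg (fun T => T (Pi.single j 1)) (h1.unique h2)

/-- Fields annihilated by the differential of a coordinate function have their bracket
annihilated by it, since the second derivative is symmetric. -/
lemma fderiv_lieB_apply_eq_zero {φ ξ η : VF n} {U : Set (Vec n)} (hU : IsOpen U)
    (hφ : ContDiffOn ℝ ∞ φ U) (hξ : ContDiffOn ℝ ∞ ξ U) (hη : ContDiffOn ℝ ∞ η U) {m : Fin n}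
    (h1 : ∀ x ∈ U, fderiv ℝ φ x (ξ x) m = 0) (h2 : ∀ x ∈ U, fderiv ℝ φ x (η x) m = 0)
    {x : Vec n} (hx : x ∈ U) : fderiv ℝ φ x (lieB ξ η x) m = 0 := by
  have hat : ContDiffAt ℝ ∞ φ x := hφ.contDiffAt (hU.mem_nhds hx)
  have hd2 : DifferentiableAt ℝ (fderiv ℝ φ) x :=
    (hat.fderiv_right (m := ∞) (by simp)).differentiableAt (by simp)
  have hsymm : IsSymmSndFDerivAt ℝ φ x := hat.isSymmSndFDerivAt
    (by simpa using WithTop.coe_le_coe.2 (le_top : (2 : ℕ∞) ≤ ⊤))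
  have key : ∀ ζ : VF n, ContDiffOn ℝ ∞ ζ U → (∀ x ∈ U, fderiv ℝ φ x (ζ x) m = 0) →
      ∀ w, fderiv ℝ (fderiv ℝ φ) x w (ζ x) m + fderiv ℝ φ x (fderiv ℝ ζ x w) m = 0 := by
    intro ζ hζ h w
    have hζd : HasFDerivAt ζ (fderiv ℝ ζ x) x :=
      ((hζ.contDiffAt (hU.mem_nhds hx)).differentiableAt (by simp)).hasFDerivAt
    have h3 := (hasFDerivAt_pi'.1 (hd2.hasFDerivAt.clm_apply hζd)) m
    have h4 : HasFDerivAt (fun y => fderiv ℝ φ y (ζ y) m) (0 : Vec n →L[ℝ] ℝ) x :=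
      (hasFDerivAt_const (0 : ℝ) x).congr_of_eventuallyEq
        (Filter.eventually_of_mem (hU.mem_nhds hx) h)
    have h5 := congrArg (fun T => T w) (h3.unique h4)
    simp only [ContinuousLinearMap.comp_apply, _root_.add_apply,
      ContinuousLinearMap.flip_apply, ContinuousLinearMap.proj_apply, Pi.add_apply,
      _root_.zero_apply] at h5
    rw [add_comm]
    exact h5
  have h3 := key η hη h2 (ξ x)
  have h4 := key ξ hξ h1 (η x)
  rw [hsymm.eq (η x) (ξ x)] at h4
  rw [lieB, map_sub, Pi.sub_apply]
  linarith

/-- Strictly upper triangular coordinates make every `Image L ^ k` involutive. -/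
lemma involutive_of_locallyReducible {L : OpField n} {p : Vec n}
    (hJ : ∀ x : Vec n, (L x) ^ n = 0 ∧ (L x).rank = n - 1)
    (h : LocallyReducible L p StrictUpperTri) :
    ∃ U : Set (Vec n), IsOpen U ∧ p ∈ U ∧
      ∀ k : ℕ, 1 ≤ k → k ≤ n - 1 →
        ∀ ξ η : VF n, ContDiffOn ℝ ∞ ξ U → ContDiffOn ℝ ∞ η U →
          (∀ x ∈ U, ξ x ∈ Set.range ((L x) ^ k).mulVec) →
          (∀ x ∈ U, η x ∈ Set.range ((L x) ^ k).mulVec) →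
          ∀ x ∈ U, lieB ξ η x ∈ Set.range ((L x) ^ k).mulVec := by
  obtain ⟨U, hU, hp, φ, ψ, hφ, hV, hψ, hψφ, hφψ, hP⟩ := h
  refine ⟨U, hU, hp, fun k hk1 hkn ξ η hξ hη hξr hηr => ?_⟩
  obtain ⟨j, rfl⟩ : ∃ j : Fin n, k = n - 1 - (j : ℕ) :=
    ⟨⟨n - 1 - k, by omega⟩, by change k = n - 1 - (n - 1 - k); omega⟩
  -- in the coordinates `φ`, the distribution is the coordinate flag
  have hmem : ∀ x ∈ U, ∀ w : Vec n,
      w ∈ Set.range (L x ^ (n - 1 - (j : ℕ))).mulVec ↔ fderiv ℝ φ x w ∈ coordFlag j := by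
    intro x hx w
    have hy : φ x ∈ φ '' U := Set.mem_image_of_mem _ hx
    have hψx : ψ (φ x) = x := hψφ x hx
    set P := jacobianMatrix φ x with hPdef
    set Q := jacobianMatrix ψ (φ x) with hQdef
    have hφd : DifferentiableAt ℝ φ x :=
      (hφ.contDiffAt (hU.mem_nhds hx)).differentiableAt (by simp)
    have hψd : DifferentiableAt ℝ ψ (φ x) :=
      (hψ.contDiffAt (hV.mem_nhds hy)).differentiableAt (by simp)
    have hQP : Q * P = 1 := jacobianMatrix_mul_eq_one hU hx hψd hφd hψφ
    have hPQ : P * Q = 1 := mul_eq_one_comm.1 hQP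
    have hA : StrictUpperTri (P * L x * Q) := by
      have := hP _ hy
      rwa [hψx] at this
    have hpow : ∀ k : ℕ, (P * L x * Q) ^ k = P * L x ^ k * Q := by
      intro k
      induction k with
      | zero => simp [hPQ]
      | succ k ih =>
        rw [pow_succ, ih, pow_succ]
        calc P * L x ^ k * Q * (P * L x * Q) = P * L x ^ k * (Q * P) * L x * Q := by
              simp only [Matrix.mul_assoc]
          _ = _ := by rw [hQP, Matrix.mul_one]; simp only [Matrix.mul_assoc]
    have hPu : IsUnit P.det := (Matrix.isUnit_iff_isUnit_det P).1 (.of_mul_eq_one Q hPQ)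
    have hQu : IsUnit Q.det := (Matrix.isUnit_iff_isUnit_det Q).1 (.of_mul_eq_one P hQP)
    have hrank : (P * L x * Q).rank = n - 1 := by
      rw [Matrix.rank_mul_eq_left_of_isUnit_det _ _ hQu,
        Matrix.rank_mul_eq_right_of_isUnit_det _ _ hPu, (hJ x).2]
    have hnil : (P * L x * Q) ^ n = 0 := by rw [hpow, (hJ x).1, Matrix.mul_zero, Matrix.zero_mul]
    rw [← jacobianMatrix_mulVec, ← range_pow_of_strictUpperTri hA hnil hrank, hpow]
    constructor
    · rintro ⟨u, rfl⟩
      refine ⟨P *ᵥ u, ?_⟩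
      rw [Matrix.mulVec_mulVec, Matrix.mul_assoc, hQP, Matrix.mul_one, ← Matrix.mulVec_mulVec]
    · rintro ⟨u, hu⟩
      refine ⟨Q *ᵥ u, ?_⟩
      have h1 := congrArg (fun z => Q *ᵥ z) hu
      simp only [Matrix.mulVec_mulVec] at h1
      rw [hQP, Matrix.one_mulVec, Matrix.mul_assoc, ← Matrix.mul_assoc Q, hQP,
        Matrix.one_mul] at h1
      rw [Matrix.mulVec_mulVec, h1]
  intro x hx
  rw [hmem x hx]
  exact fun m hm => fderiv_lieB_apply_eq_zero hU hφ hξ hη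
    (fun x hx => (hmem x hx _).1 (hξr x hx) m hm) (fun x hx => (hmem x hx _).1 (hηr x hx) m hm) hx

/-- Coordinates adapted to the flag of the cyclic frame make `L` strictly upper triangular. -/
lemma locallyReducible_of_involutive {L : OpField n} (hL : SmoothOp L) {p : Vec n}
    (hJ : ∀ x : Vec n, (L x) ^ n = 0 ∧ (L x).rank = n - 1) {U : Set (Vec n)}
    (hU : IsOpen U) (hp : p ∈ U)
    (hinvol : ∀ k : ℕ, 1 ≤ k → k ≤ n - 1 →
        ∀ ξ η : VF n, ContDiffOn ℝ ∞ ξ U → ContDiffOn ℝ ∞ η U →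
          (∀ x ∈ U, ξ x ∈ Set.range ((L x) ^ k).mulVec) →
          (∀ x ∈ U, η x ∈ Set.range ((L x) ^ k).mulVec) →
          ∀ x ∈ U, lieB ξ η x ∈ Set.range ((L x) ^ k).mulVec) :
    LocallyReducible L p StrictUpperTri := by
  rcases Nat.eq_zero_or_pos n with rfl | hn
  · refine ⟨Set.univ, isOpen_univ, Set.mem_univ _, id, id, contDiffOn_id, ?_, contDiffOn_id,
      fun _ _ => rfl, fun _ _ => rfl, fun _ _ i => i.elim0⟩
    rw [Set.image_id]
    exact isOpen_univ
  obtain ⟨v, hv⟩ := exists_pow_mulVec_ne_zero hn (hJ p).2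
  have hX : ∀ i, ContDiff ℝ ∞ (cyclicFrame L v i) := contDiff_cyclicFrame hL v
  set O : Set (Vec n) := U ∩ {x | cyclicFrame L v ⟨0, hn⟩ x ≠ 0} with hOdef
  have hO : IsOpen O := hU.inter (isOpen_ne_fun (hX _).continuous continuous_const)
  have hvO : ∀ x ∈ O, (L x ^ (n - 1)) *ᵥ v ≠ 0 := fun x hx => hx.2
  have hinv : ∀ x ∈ O, (frameMap (cyclicFrame L v) x).IsInvertible := fun x hx =>
    frameMap_isInvertible (cyclicFrame_injective (hJ x).1 (hvO x hx))
  obtain ⟨R, hpR, hRO, hRs, hRsymm, hflag⟩ := exists_frame_chart hX hO ⟨hp, hv⟩ hinv (by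
    intro x hx j i hi l hl
    rw [mem_frameFlag_cyclicFrame (hJ x).1 (hvO x hx)]
    rcases Nat.eq_zero_or_pos (n - 1 - (j : ℕ)) with h0 | hpos
    · rw [h0, pow_zero]
      exact ⟨_, Matrix.one_mulVec _⟩
    · exact hinvol _ hpos (by omega) _ _ (hX i).contDiffOn (hX l).contDiffOn
        (fun x _ => cyclicFrame_mem_range L v x hi) (fun x _ => cyclicFrame_mem_range L v x hl)
        x hx.1)
  refine ⟨R.target, R.open_target, hpR, R.symm, R, hRsymm, ?_⟩
  rw [R.symm_image_target_eq_source]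
  refine ⟨R.open_source, hRs, fun x hx => R.right_inv hx, fun y hy => R.left_inv hy, ?_⟩
  intro y hy i j hji
  have hx : R y ∈ R.target := R.map_source hy
  have hxO : R y ∈ O := hRO hx
  set P := jacobianMatrix R.symm (R y) with hPdef
  set Q := jacobianMatrix R y with hQdef
  have hRd : DifferentiableAt ℝ R y :=
    (hRs.contDiffAt (R.open_source.mem_nhds hy)).differentiableAt (by simp)
  have hRsd : DifferentiableAt ℝ R.symm (R y) :=
    (hRsymm.contDiffAt (R.open_target.mem_nhds hx)).differentiableAt (by simp)
  have hPQ : P * Q = 1 :=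
    jacobianMatrix_mul_eq_one R.open_source hy hRsd hRd fun z hz => R.left_inv hz
  have hQP : Q * P = 1 := mul_eq_one_comm.1 hPQ
  -- `c` is the `j`-th column of the operator in the new coordinates
  set c : Vec n := (P * L (R y) * Q) *ᵥ Pi.single j 1 with hc
  have hcol : (P * L (R y) * Q) i j = c i := by
    rw [hc, Matrix.mulVec_single_one]
    rfl
  have hQc : Q *ᵥ c = L (R y) *ᵥ (Q *ᵥ Pi.single j 1) := by
    rw [hc, Matrix.mulVec_mulVec, Matrix.mulVec_mulVec, Matrix.mul_assoc, ← Matrix.mul_assoc,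
      hQP, Matrix.one_mul]
  have hQj : ∀ l, Q *ᵥ Pi.single l 1 ∈ frameFlag (cyclicFrame L v) l (R y) := fun l => by
    rw [hQdef, jacobianMatrix_mulVec]
    exact hflag y hy l
  obtain ⟨u, hu⟩ := (mem_frameFlag_cyclicFrame (hJ _).1 (hvO _ hxO)).1 (hQj j)
  rw [hcol]
  rcases Nat.eq_zero_or_pos (j : ℕ) with hj0 | hjpos
  · have h1 : Q *ᵥ c = 0 := by
      rw [hQc, ← hu, Matrix.mulVec_mulVec, ← pow_succ', pow_eq_zero_of_le (by omega) (hJ _).1,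
        Matrix.zero_mulVec]
    have h2 : c = P *ᵥ (Q *ᵥ c) := by rw [Matrix.mulVec_mulVec, hPQ, Matrix.one_mulVec]
    rw [h2, h1, Matrix.mulVec_zero]
    rfl
  · set j' : Fin n := ⟨j - 1, by omega⟩ with hj'
    have h1 : Q *ᵥ c ∈ frameFlag (cyclicFrame L v) j' (R y) := by
      rw [mem_frameFlag_cyclicFrame (hJ _).1 (hvO _ hxO), hQc, ← hu, Matrix.mulVec_mulVec,
        ← pow_succ']
      refine ⟨u, ?_⟩
      congr 2
      change n - 1 - ((j : ℕ) - 1) = _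
      omega
    obtain ⟨e, he⟩ := hinv _ hxO
    -- `T` is the matrix of the coordinate fields with respect to the frame
    set T : Vec n →ₗ[ℝ] Vec n := (e.symm : Vec n →ₗ[ℝ] Vec n) ∘ₗ Q.mulVecLin with hT
    have hTe : ∀ l a, Q *ᵥ a ∈ frameFlag (cyclicFrame L v) l (R y) → T a ∈ coordFlag l := by
      rintro l a ⟨b, hb, hbe⟩
      have h2 : T a = b := by
        change e.symm (Q *ᵥ a) = b
        rw [← hbe, ← he]
        exact e.symm_apply_apply b
      rwa [h2]
    have hTinj : Function.Injective T := by
      refine e.symm.injective.comp fun a b hab => ?_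
      have h2 := congrArg (fun z => P *ᵥ z) hab
      simpa only [Matrix.mulVecLin_apply, Matrix.mulVec_mulVec, hPQ, Matrix.one_mulVec] using h2
    have hcj : c ∈ coordFlag j' := mem_coordFlag_of_map hTinj
      (fun a ha => map_mem_coordFlag (fun l => hTe l _ (hQj l)) ha) (hTe j' c h1)
    refine hcj i ?_
    rw [Fin.lt_def]
    have : (j : ℕ) ≤ i := hji
    change (j : ℕ) - 1 < i
    omega

end Reduction

/-- an operator field similar at every point to the nilpotent
`n × n` Jordan block is locally reducible to strictly upper triangular form
near `p` iff, on some open neighbourhood of `p`, all the distributions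
`Image L^k`, `k = 1, …, n-1`, are involutive. -/
theorem stmt_4 (n : ℕ) (L : OpField n) (hL : SmoothOp L)
    (hJordan : ∀ x : Vec n, (L x) ^ n = 0 ∧ (L x).rank = n - 1)
    (p : Vec n) :
    LocallyReducible L p StrictUpperTri ↔
      ∃ U : Set (Vec n), IsOpen U ∧ p ∈ U ∧
        ∀ k : ℕ, 1 ≤ k → k ≤ n - 1 →
          ∀ ξ η : VF n, ContDiffOn ℝ (⊤ : ℕ∞) ξ U → ContDiffOn ℝ (⊤ : ℕ∞) η U →
            (∀ x ∈ U, ξ x ∈ Set.range ((L x) ^ k).mulVec) →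
            (∀ x ∈ U, η x ∈ Set.range ((L x) ^ k).mulVec) →
            ∀ x ∈ U, lieB ξ η x ∈ Set.range ((L x) ^ k).mulVec := by
  constructor
  · exact involutive_of_locallyReducible hJordan
  · rintro ⟨U, hU, hp, hinvol⟩
    exact locallyReducible_of_involutive hL hJordan hU hp hinvol
end

section
/- Let L be the operator field on ℝ⁴ (coordinates x₁, x₂, x₃, x₄) given by the matrix with rows (0, 1, 0, 0), (0, 0, 1, 0), (0, 0, −x₂, 1), (0, 0, −x₂², x₂). Then: (a) at every point x, L(x)⁴ = 0 and rank L(x) = 3 (so L(x) is similar to the 4×4 nilpotent Jordan block); (b) the level-3 Haantjes torsion vanishes identically, T^{(3)}_L(ξ, η)(x) = 0 for all smooth vector fields ξ, η and all x; (c) the vector fields ξ₂ = ∂_{x₂} and ξ₃ = ∂_{x₃} + x₂ ∂_{x₄} take values in Image L(x) at every point, but their Lie bracket [ξ₂, ξ₃] = ∂_{x₄} does not lie in Image L(x) at any point; in particular the distribution Image L is not involutive. -/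
/-!
Only the second coordinate enters `L`, so the derivative of `L` in a direction `v` is `v₂ L'`
with `L' = ∂L/∂x₂`. By the product rule all derivatives of `ξ` and `η` cancel in the Nijenhuis
torsion, which leaves the pointwise bilinear expression
`T_L(ξ,η) = (Lξ)₂ L'η - (Lη)₂ L'ξ - ξ₂ L L'η + η₂ L L'ξ` (`nijTor_Lexample`).
Substituting `Lξ`, `L²ξ`, … for the arguments, the vanishing of the level-3 torsion becomes a
polynomial identity in `x₂` and the components of `ξ(x)`, `η(x)`.

The rank of `L(x)` follows from rank-nullity, the kernel being the line spanned by `∂_{x₁}`, and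
`Image L(x)` is contained in the hyperplane `y₄ = x₂ y₃`, which excludes `∂_{x₄}`.
-/

open Matrix

/-- The operator field of Example 1 of the paper. -/
noncomputable def Lexample : OpField 4 := fun x =>
  !![0, 1, 0, 0;
     0, 0, 1, 0;
     0, 0, -x 1, 1;
     0, 0, -(x 1) ^ 2, x 1]

/-- `L(x) u` in components. -/
lemma Lexample_mulVec (x u : Vec 4) :
    (Lexample x).mulVec u =
      ![u 1, u 2, -x 1 * u 2 + u 3, -(x 1) ^ 2 * u 2 + x 1 * u 3] := by
  ext i
  fin_cases i <;> simp [Lexample, Matrix.mulVec, dotProduct, Fin.sum_univ_four]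

lemma app_Lexample (ξ : VF 4) (x : Vec 4) :
    app Lexample ξ x =
      ![ξ x 1, ξ x 2, -x 1 * ξ x 2 + ξ x 3, -(x 1) ^ 2 * ξ x 2 + x 1 * ξ x 3] :=
  Lexample_mulVec x (ξ x)

lemma differentiable_app_Lexample {ξ : VF 4} (h : Differentiable ℝ ξ) :
    Differentiable ℝ (app Lexample ξ) := by
  have h' := differentiable_pi.1 h
  rw [funext (app_Lexample ξ), differentiable_pi]
  have h2 : Differentiable ℝ fun y => ξ y 2 := h' 2
  have h3 : Differentiable ℝ fun y => ξ y 3 := h' 3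
  have hx : Differentiable ℝ fun y : Vec 4 => y 1 := differentiable_apply 1
  intro i
  fin_cases i
  · exact h' 1
  · exact h' 2
  · exact (hx.neg.mul h2).add h3
  · exact ((hx.pow 2).neg.mul h2).add (hx.mul h3)

/-- Product rule `D(Lξ)(v) = L (Dξ v) + v₂ L' ξ`, in components. -/
lemma fderiv_app_Lexample {ξ : VF 4} (h : Differentiable ℝ ξ) (x v : Vec 4) :
    fderiv ℝ (app Lexample ξ) x v =
      (Lexample x).mulVec (fderiv ℝ ξ x v) +
        v 1 • ![0, 0, -ξ x 2, -2 * x 1 * ξ x 2 + ξ x 3] := by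
  have hξ := hasFDerivAt_pi'.1 (h x).hasFDerivAt
  have hx : HasFDerivAt (fun y : Vec 4 => y 1) (ContinuousLinearMap.proj (R := ℝ) 1) x :=
    (ContinuousLinearMap.proj (R := ℝ) (φ := fun _ : Fin 4 => ℝ) 1).hasFDerivAt
  have hL := hasFDerivAt_pi'.1 (differentiable_app_Lexample h x).hasFDerivAt
  rw [funext (app_Lexample ξ)] at hL ⊢
  have h2 := (hx.neg.mul (hξ 2)).add (hξ 3)
  have h3 := ((hx.pow 2).neg.mul (hξ 2)).add (hx.mul (hξ 3))
  rw [Lexample_mulVec]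
  ext i
  fin_cases i
  · have := congrArg (fun l => l v) ((hL 0).unique (hξ 1))
    simpa using this
  · have := congrArg (fun l => l v) ((hL 1).unique (hξ 2))
    simpa using this
  · have := congrArg (fun l => l v) ((hL 2).unique h2)
    simp at this ⊢
    rw [this]; ring
  · have := congrArg (fun l => l v) ((hL 3).unique h3)
    simp at this ⊢
    rw [this]; ring

/-- The bilinear expression `(Lu)₂ L'v - (Lv)₂ L'u - u₂ L L'v + v₂ L L'u` at the point `x`, with
`L' = ∂L/∂x₂`. Lean indices start at `0`, so `u₂` is `u 1`, and `(Lu)₂ = u₃` is `u 2`. -/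
noncomputable def pointTor (x u v : Vec 4) : Vec 4 :=
  u 2 • ![0, 0, -v 2, -2 * x 1 * v 2 + v 3] - v 2 • ![0, 0, -u 2, -2 * x 1 * u 2 + u 3]
    - u 1 • (Lexample x).mulVec ![0, 0, -v 2, -2 * x 1 * v 2 + v 3]
    + v 1 • (Lexample x).mulVec ![0, 0, -u 2, -2 * x 1 * u 2 + u 3]

lemma nijTor_Lexample {ξ η : VF 4} (hξ : Differentiable ℝ ξ) (hη : Differentiable ℝ η)
    (x : Vec 4) : nijTor Lexample ξ η x = pointTor x (ξ x) (η x) := by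
  simp only [nijTor, Pi.add_apply, Pi.sub_apply]
  simp only [app.eq_def Lexample (app _ _), app.eq_def Lexample (lieB _ _), lieB,
    fderiv_app_Lexample hξ, fderiv_app_Lexample hη, pointTor]
  have e1 : ∀ ζ : VF 4, app Lexample ζ x 1 = ζ x 2 := fun ζ => by simp [app_Lexample]
  simp only [Matrix.mulVec_add, Matrix.mulVec_sub, Matrix.mulVec_smul, e1]
  abel

lemma genTor_two_Lexample {ξ η : VF 4} (hξ : Differentiable ℝ ξ) (hη : Differentiable ℝ η)
    (x : Vec 4) : genTor Lexample 2 ξ η x = 0 := by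
  have a1 := differentiable_app_Lexample hξ
  have a2 := differentiable_app_Lexample a1
  have b1 := differentiable_app_Lexample hη
  have b2 := differentiable_app_Lexample b1
  simp only [genTor, Pi.add_apply, Pi.sub_apply, app_Lexample _ x, nijTor_Lexample, *]
  ext i
  fin_cases i <;> simp [pointTor, Lexample_mulVec] <;> ring

lemma Lexample_pow_four (x : Vec 4) : Lexample x ^ 4 = 0 := by
  ext i j
  have h : (Lexample x ^ 4) i j = ((Lexample x ^ 4).mulVec (Pi.single j 1)) i := by simp
  rw [h]
  simp only [pow_succ, pow_zero, one_mul, ← Matrix.mulVec_mulVec, Lexample_mulVec]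
  fin_cases i <;> simp <;> ring

lemma Lexample_rank (x : Vec 4) : (Lexample x).rank = 3 := by
  have hk : LinearMap.ker (Lexample x).mulVecLin = ℝ ∙ (![1, 0, 0, 0] : Vec 4) := by
    ext u
    rw [LinearMap.mem_ker, Matrix.mulVecLin_apply, Lexample_mulVec, Submodule.mem_span_singleton]
    constructor
    · intro h
      have h0 := congrFun h 0
      have h1 := congrFun h 1
      have h2 := congrFun h 2
      simp at h0 h1 h2
      rw [h1] at h2
      refine ⟨u 0, ?_⟩
      ext i
      fin_cases i <;> simp_all
    · rintro ⟨a, rfl⟩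
      ext i
      fin_cases i <;> simp
  have hne : (![1, 0, 0, 0] : Vec 4) ≠ 0 := fun h => by simpa using congrFun h 0
  have := LinearMap.finrank_range_add_finrank_ker (Lexample x).mulVecLin
  rw [hk, finrank_span_singleton hne] at this
  simp at this
  rw [Matrix.rank]
  omega

/-- the explicit operator field `Lexample` on ℝ⁴ is pointwise
similar to the nilpotent Jordan block, has identically vanishing level-3
Haantjes torsion, but the distribution `Image L` is not involutive:
`ξ₂ = ∂_{x₂}` and `ξ₃ = ∂_{x₃} + x₂ ∂_{x₄}` lie in `Image L`, while their Lie
bracket `[ξ₂, ξ₃] = ∂_{x₄}` does not. -/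
theorem stmt_5 :
    (∀ x : Vec 4, (Lexample x) ^ 4 = 0 ∧ (Lexample x).rank = 3) ∧
    (∀ ξ η : VF 4, SmoothVF ξ → SmoothVF η →
      ∀ x : Vec 4, genTor Lexample 2 ξ η x = 0) ∧
    (letI ξ₂ : VF 4 := fun _ => ![0, 1, 0, 0]
     letI ξ₃ : VF 4 := fun x => ![0, 0, 1, x 1]
     (∀ x : Vec 4, ξ₂ x ∈ Set.range (Lexample x).mulVec) ∧
     (∀ x : Vec 4, ξ₃ x ∈ Set.range (Lexample x).mulVec) ∧
     (lieB ξ₂ ξ₃ = fun _ => ![0, 0, 0, 1]) ∧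
     (∀ x : Vec 4, (![0, 0, 0, 1] : Vec 4) ∉ Set.range (Lexample x).mulVec)) := by
  refine ⟨fun x => ⟨Lexample_pow_four x, Lexample_rank x⟩, fun ξ η hξ hη x =>
    genTor_two_Lexample (hξ.differentiable (by simp)) (hη.differentiable (by simp)) x,
    fun x => ⟨![0, 0, 1, x 1], ?_⟩, fun x => ⟨![0, 0, 0, 1], ?_⟩, ?_, ?_⟩
  · rw [Lexample_mulVec]
    ext i
    fin_cases i <;> simp
    ring
  · rw [Lexample_mulVec]
    ext i
    fin_cases i <;> simp
  · funext x
    have h : HasFDerivAt (fun x : Vec 4 => (![0, 0, 1, x 1] : Vec 4))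
        (ContinuousLinearMap.pi
          ![0, 0, 0, ContinuousLinearMap.proj (R := ℝ) (φ := fun _ : Fin 4 => ℝ) 1]) x := by
      rw [hasFDerivAt_pi]
      intro i
      fin_cases i
      · exact hasFDerivAt_const _ _
      · exact hasFDerivAt_const _ _
      · exact hasFDerivAt_const _ _
      · exact (ContinuousLinearMap.proj (R := ℝ) (φ := fun _ : Fin 4 => ℝ) 1).hasFDerivAt
    simp only [lieB, h.fderiv]
    ext i
    fin_cases i <;> simp
  · rintro x ⟨u, hu⟩
    rw [Lexample_mulVec] at hu
    have h2 := congrFun hu 2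
    have h3 := congrFun hu 3
    simp at h2 h3
    -- the image lies in the hyperplane `y 3 = x 1 * y 2`
    have : (0 : ℝ) = 1 := by linear_combination h3 - x 1 * h2
    exact zero_ne_one this
end

section
/- Let L be a smooth operator field on ℝ² such that at every point x the matrix L(x) has a single real eigenvalue f(x) = (trace L(x))/2 of geometric multiplicity one, i.e. (L(x) − f(x)·I)² = 0 and L(x) ≠ f(x)·I. Then near every point p ∈ ℝ², L is locally reducible to upper triangular form. -/
/-!
Put `f = (trace L) / 2` and `N = L - f I`, so that `N ^ 2 = 0` and `N` vanishes nowhere. Some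
column `v` of `N` is nonzero at `p`; it is a smooth vector field on the whole plane, and
`N ^ 2 = 0` says that `N v = 0`, that is, `L v = f v`. In coordinates in which `v` is the first
coordinate field, the first column of `L` is `(f, 0)`, so `L` is upper triangular. Everything
therefore rests on straightening a vector field near a point where it does not vanish
(`exists_straightening`).

The straightening chart is `y ↦ Φ (y 0, p + y 1 • b)`, with `Φ` the flow of `v` and `b` independent
of `v p`; the inverse function theorem makes it a local diffeomorphism, provided that `Φ` is smooth
jointly in time and initial value (`exists_contDiffOn_flow`). This is obtained as follows. After
rescaling time to `[0, 1]`, the solution with initial value `q` at time `t` is a curve `γ` in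
`C([0, 1], E)` with `γ - q - t • ∫ v ∘ γ = 0`. The left-hand side is smooth in `(t, q, γ)`, because
postcomposition with a smooth map is smooth on `C(K, E)` (`contDiff_postcomp`). At `t = 0` its
derivative in `γ` is the identity, so the inverse function theorem applied to
`(t, q, γ) ↦ (t, q, γ - q - t • ∫ v ∘ γ)` gives a `γ` depending smoothly on `(t, q)`. The flow is
its value at time `1`. Local uniqueness shows that the curve for `(s t, q)` is the rescaled curve
`σ ↦ γ (s σ)`, and from this the integral equation, hence the differential equation, for the flow
follows.
-/

open Matrix

universe u

open Set MeasureTheory Topology Filter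
open scoped ContDiff

/-! ### The inverse function theorem with a smooth inverse on the whole target -/

/-- The local inverse has to be smooth on an open set: smoothness at the single point `F x₀`, in the
sense of `ContDiffAt ℝ ∞`, only gives `C^m` on a neighbourhood that depends on `m`. This is achieved
by shrinking the domain to the open set of points at which the derivative is invertible. -/
theorem exists_openPartialHomeomorph_contDiffOn_symm {X : Type*} [NormedAddCommGroup X]
    [NormedSpace ℝ X] [CompleteSpace X] {F : X → X} {S : Set X} (hS : IsOpen S)
    (hF : ContDiffOn ℝ ∞ F S) {x₀ : X} (hx₀ : x₀ ∈ S) (F' : X ≃L[ℝ] X)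
    (hF' : HasFDerivAt F (F' : X →L[ℝ] X) x₀) :
    ∃ e : OpenPartialHomeomorph X X, x₀ ∈ e.source ∧ e.source ⊆ S ∧ (e : X → X) = F ∧
      ContDiffOn ℝ ∞ e.symm e.target := by
  have hat : ∀ x ∈ S, ContDiffAt ℝ ∞ F x := fun x hx => hF.contDiffAt (hS.mem_nhds hx)
  have h0 : (∞ : WithTop ℕ∞) ≠ 0 := by simp
  let e₀ := (hat x₀ hx₀).toOpenPartialHomeomorph F hF' h0
  let R : Set (X →L[ℝ] X) := range ((↑) : (X ≃L[ℝ] X) → X →L[ℝ] X)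
  have hR : IsOpen R := ContinuousLinearEquiv.isOpen
  have hT : IsOpen (S ∩ fderiv ℝ F ⁻¹' R) :=
    (hF.continuousOn_fderiv_of_isOpen hS (by simp)).isOpen_inter_preimage hS hR
  let e := e₀.restrOpen _ hT
  have he : (e : X → X) = F := rfl
  refine ⟨e, ?_, ?_, he, ?_⟩
  · refine ⟨(hat x₀ hx₀).mem_toOpenPartialHomeomorph_source hF' h0, hx₀, ?_⟩
    rw [mem_preimage, hF'.fderiv]
    exact ⟨F', rfl⟩
  · intro x hx
    exact hx.2.1
  · intro y hy
    obtain ⟨hS', D, hD⟩ := (e.map_target hy).2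
    refine (e.contDiffAt_symm hy (f₀' := D) ?_ ?_).contDiffWithinAt
    · rw [hD, he]
      exact ((hat _ hS').differentiableAt h0).hasFDerivAt
    · exact hat _ hS'

/-! ### Smoothness of postcomposition on spaces of continuous maps -/

section Nemytskii

variable {K : Type*} [TopologicalSpace K] [CompactSpace K]

/-- The bilinear map sending a continuous family of operators `A` and a continuous map `h` to
`s ↦ A s (h s)`, as a continuous linear map in each variable. -/
noncomputable def pointwiseApply (K : Type*) [TopologicalSpace K] [CompactSpace K]
    (E F : Type*) [NormedAddCommGroup E] [NormedSpace ℝ E] [NormedAddCommGroup F]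
    [NormedSpace ℝ F] : C(K, E →L[ℝ] F) →L[ℝ] C(K, E) →L[ℝ] C(K, F) :=
  LinearMap.mkContinuous₂
    (LinearMap.mk₂ ℝ
      (fun (A : C(K, E →L[ℝ] F)) (h : C(K, E)) => (⟨fun s => A s (h s), by fun_prop⟩ : C(K, F)))
      (fun _ _ _ => by ext; simp) (fun _ _ _ => by ext; simp)
      (fun _ _ _ => by ext; simp) (fun _ _ _ => by ext; simp)) 1
    (fun A h => by
      rw [one_mul]
      refine (ContinuousMap.norm_le _ (by positivity)).2 fun s => ?_
      exact (A s).le_of_opNorm_le_of_le (A.norm_coe_le_norm s) (h.norm_coe_le_norm s))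

@[simp] theorem pointwiseApply_apply {E F : Type*} [NormedAddCommGroup E] [NormedSpace ℝ E]
    [NormedAddCommGroup F] [NormedSpace ℝ F] (A : C(K, E →L[ℝ] F)) (h : C(K, E)) (s : K) :
    pointwiseApply K E F A h s = A s (h s) := rfl

/-- Postcomposition with a `C¹` map `v` is differentiable: since the image of `α` is compact, the
first-order Taylor estimate for `v` is uniform along it. -/
theorem hasFDerivAt_postcomp {E F : Type*} [NormedAddCommGroup E] [NormedSpace ℝ E]
    [NormedAddCommGroup F] [NormedSpace ℝ F] (v : C(E, F)) (v' : C(E, E →L[ℝ] F))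
    (hv : ∀ x, HasFDerivAt v (v' x) x) (α : C(K, E)) :
    HasFDerivAt (fun β : C(K, E) => v.comp β) (pointwiseApply K E F (v'.comp α)) α := by
  rw [hasFDerivAt_iff_isLittleO, Asymptotics.isLittleO_iff]
  intro c hc
  have hcomp : IsCompact (range α) := isCompact_range α.continuous
  have hU := hcomp.uniformContinuousAt_of_continuousAt v'
    (fun a _ => v'.continuous.continuousAt) (Metric.dist_mem_uniformity hc)
  obtain ⟨δ, hδ, hU⟩ := Metric.mem_uniformity_dist.1 hU
  filter_upwards [Metric.ball_mem_nhds α hδ] with β hβ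
  refine (ContinuousMap.norm_le _ (by positivity)).2 fun s => ?_
  have hs : dist (β s) (α s) < δ := (ContinuousMap.dist_apply_le_dist s).trans_lt hβ
  have key : ‖v (β s) - v (α s) - v' (α s) (β s - α s)‖ ≤ c * ‖β s - α s‖ := by
    refine Convex.norm_image_sub_le_of_norm_hasFDerivWithin_le' (s := Metric.ball (α s) δ)
      (fun x _ => (hv x).hasFDerivWithinAt) (fun x hx => ?_) (convex_ball _ _)
      (Metric.mem_ball_self hδ) hs
    have := hU (a := α s) (b := x) (by rwa [dist_comm]) (mem_range_self s)
    rw [← dist_eq_norm, dist_comm]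
    exact le_of_lt this
  refine key.trans ?_
  gcongr
  exact (β - α).norm_coe_le_norm s

/-- The derivative of postcomposition with `v` is given by postcomposition with the derivative of
`v`, which allows induction on the order of smoothness. The spaces `E` and `F` share a universe so
that `E →L[ℝ] F` is again an admissible target. -/
theorem contDiff_postcomp {E : Type u} [NormedAddCommGroup E] [NormedSpace ℝ E]
    (n : ℕ) : ∀ {F : Type u} [NormedAddCommGroup F] [NormedSpace ℝ F] (v : C(E, F)),
      ContDiff ℝ ∞ v → ContDiff ℝ n (fun β : C(K, E) => v.comp β) := by
  induction n with
  | zero =>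
    intro F _ _ v _
    exact contDiff_zero.2 (ContinuousMap.continuous_postcomp v)
  | succ n ih =>
    intro F _ _ v hv
    have hd := (contDiff_infty_iff_fderiv.1 hv)
    let v' : C(E, E →L[ℝ] F) := ⟨fderiv ℝ v, hd.2.continuous⟩
    have := ih v' hd.2
    push_cast
    refine contDiff_succ_iff_hasFDerivAt.2
      ⟨fun α => pointwiseApply K E F (v'.comp α), ?_, fun α => ?_⟩
    · exact (pointwiseApply K E F).contDiff.comp this
    · exact hasFDerivAt_postcomp v v' (fun x => (hd.1 x).hasFDerivAt) α

end Nemytskii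

/-! ### Smooth dependence of the flow on time and initial value -/

section Flow


variable {E : Type u} [NormedAddCommGroup E] [NormedSpace ℝ E]

/-- Integration from `0` as an operator on `C([0, 1], E)`. The integrand is extended to the real
line by constants, which does not affect its integral over `[0, s]` for `s ∈ [0, 1]`. -/
noncomputable def primitive (E : Type u) [NormedAddCommGroup E] [NormedSpace ℝ E] :
    C(unitInterval, E) →L[ℝ] C(unitInterval, E) :=
  LinearMap.mkContinuous
    { toFun := fun γ => ⟨fun s => ∫ σ in (0 : ℝ)..s, IccExtend zero_le_one γ σ,
        (intervalIntegral.continuous_primitive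
          (fun a b => (γ.continuous.Icc_extend' (h := zero_le_one)).intervalIntegrable a b) 0).comp
          continuous_subtype_val⟩
      map_add' := fun γ η => by
        ext s
        exact intervalIntegral.integral_add
          ((γ.continuous.Icc_extend' (h := zero_le_one)).intervalIntegrable _ _)
          ((η.continuous.Icc_extend' (h := zero_le_one)).intervalIntegrable _ _)
      map_smul' := fun c γ => by
        ext s
        exact intervalIntegral.integral_smul c _ } 1
    (fun γ => by
      rw [one_mul]
      refine (ContinuousMap.norm_le _ (by positivity)).2 fun s => ?_
      refine (intervalIntegral.norm_integral_le_of_norm_le_const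
        (fun σ _ => γ.norm_coe_le_norm _)).trans ?_
      rw [sub_zero, abs_of_nonneg s.2.1]
      exact mul_le_of_le_one_right (norm_nonneg _) s.2.2)

theorem primitive_apply (γ : C(unitInterval, E)) (s : unitInterval) :
    primitive E γ s = ∫ σ in (0 : ℝ)..s, IccExtend zero_le_one γ σ := rfl

/-- Multiplication by `s` on the unit interval. -/
def rescale (s : unitInterval) : C(unitInterval, unitInterval) := ⟨fun σ => s * σ, by fun_prop⟩

/-- The substitution rule `s * ∫_0^r γ (s σ) dσ = ∫_0^{s r} γ τ dτ`. -/
theorem primitive_rescale (γ : C(unitInterval, E)) (s : unitInterval) :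
    (s : ℝ) • primitive E (γ.comp (rescale s)) = (primitive E γ).comp (rescale s) := by
  ext r
  have hr := r.2
  have hs := s.2
  change (s : ℝ) • primitive E (γ.comp (rescale s)) r = primitive E γ (s * r)
  rw [primitive_apply, primitive_apply, Set.Icc.coe_mul, mul_comm (s : ℝ) r]
  have := intervalIntegral.smul_integral_comp_mul_right (a := 0) (b := r)
    (IccExtend zero_le_one γ) (s : ℝ)
  rw [zero_mul] at this
  rw [← this]
  congr 1
  refine intervalIntegral.integral_congr fun σ hσ => ?_
  rw [uIcc_of_le hr.1] at hσ
  have hσ1 : σ ∈ unitInterval := ⟨hσ.1, hσ.2.trans hr.2⟩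
  have hσ2 : σ * s ∈ unitInterval := unitInterval.mul_mem hσ1 hs
  rw [IccExtend_of_mem _ _ hσ1]
  change _ = IccExtend zero_le_one γ (σ * s)
  rw [IccExtend_of_mem _ _ hσ2]
  change γ (s * ⟨σ, hσ1⟩) = _
  congr 1
  ext
  simp [mul_comm]

/-- The map `((t, q), γ) ↦ ((t, q), γ - q - t • ∫ v ∘ γ)`. The last component vanishes exactly when
`γ` solves `γ' = t • v γ`, `γ 0 = q` on `[0, 1]`. -/
noncomputable def picardMap (v : C(E, E)) (x : (ℝ × E) × C(unitInterval, E)) :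
    (ℝ × E) × C(unitInterval, E) :=
  (x.1, x.2 - ContinuousLinearMap.const (R := ℝ) unitInterval x.1.2 -
    x.1.1 • primitive E (v.comp x.2))

theorem contDiff_picardMap (v : C(E, E)) (hv : ContDiff ℝ ∞ v) :
    ContDiff ℝ ∞ (picardMap v) := by
  have hN : ContDiff ℝ ∞ (fun β : C(unitInterval, E) => v.comp β) :=
    contDiff_infty.2 fun n => contDiff_postcomp n v hv
  have hN' : ContDiff ℝ ∞ (fun x : (ℝ × E) × C(unitInterval, E) => primitive E (v.comp x.2)) :=
    (primitive E).contDiff.comp (hN.comp contDiff_snd)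
  unfold picardMap
  refine contDiff_fst.prodMk ((contDiff_snd.sub ?_).sub ((contDiff_fst.comp contDiff_fst).smul hN'))
  exact (ContinuousLinearMap.const (R := ℝ) (M := E) unitInterval).contDiff.comp
    (contDiff_snd.comp contDiff_fst)

/-- At `t = 0` the derivative of the map is a shear `(u, η) ↦ (u, η + A u)`, hence invertible. -/
theorem exists_hasFDerivAt_picardMap (v : C(E, E)) (hv : ContDiff ℝ ∞ v) (p : E) :
    ∃ D : ((ℝ × E) × C(unitInterval, E)) ≃L[ℝ] ((ℝ × E) × C(unitInterval, E)),
      HasFDerivAt (picardMap v) (D : _ →L[ℝ] _) ((0, p), ContinuousMap.const unitInterval p) := by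
  have hN : ContDiff ℝ ∞ (fun β : C(unitInterval, E) => v.comp β) :=
    contDiff_infty.2 fun n => contDiff_postcomp n v hv
  have hN' : ContDiff ℝ ∞ (fun x : (ℝ × E) × C(unitInterval, E) => primitive E (v.comp x.2)) :=
    (primitive E).contDiff.comp (hN.comp contDiff_snd)
  set x₀ : (ℝ × E) × C(unitInterval, E) := ((0, p), ContinuousMap.const unitInterval p)
  have h1 := (hN'.differentiable (by simp) x₀).hasFDerivAt
  have h2 : HasFDerivAt (fun x : (ℝ × E) × C(unitInterval, E) => x.1.1)
    ((ContinuousLinearMap.fst ℝ ℝ E).comp (ContinuousLinearMap.fst ℝ (ℝ × E) C(unitInterval, E))) x₀ :=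
    hasFDerivAt_fst.comp x₀ hasFDerivAt_fst
  have h3 : HasFDerivAt (fun x : (ℝ × E) × C(unitInterval, E) =>
      ContinuousLinearMap.const (R := ℝ) unitInterval x.1.2)
    ((ContinuousLinearMap.const (R := ℝ) unitInterval).comp
      ((ContinuousLinearMap.snd ℝ ℝ E).comp
        (ContinuousLinearMap.fst ℝ (ℝ × E) C(unitInterval, E)))) x₀ :=
    (ContinuousLinearMap.hasFDerivAt _).comp x₀ (hasFDerivAt_snd.comp x₀ hasFDerivAt_fst)
  let A : (ℝ × E) →L[ℝ] C(unitInterval, E) :=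
    -((ContinuousLinearMap.const (R := ℝ) unitInterval).comp (ContinuousLinearMap.snd ℝ ℝ E)
      + (ContinuousLinearMap.fst ℝ ℝ E).smulRight (primitive E (v.comp x₀.2)))
  refine ⟨(ContinuousLinearEquiv.refl ℝ (ℝ × E)).skewProd (ContinuousLinearEquiv.refl ℝ _) A, ?_⟩
  refine (hasFDerivAt_fst.prodMk ((hasFDerivAt_snd.sub h3).sub (h2.smul h1))).congr_fderiv ?_
  refine ContinuousLinearMap.ext fun x => ?_
  refine Prod.ext rfl ?_
  simp [A, x₀]
  abel

/-- A smooth vector field on a Banach space has a local flow that is smooth jointly in time and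
initial value. -/
theorem exists_contDiffOn_flow [CompleteSpace E] (v : E → E) (hv : ContDiff ℝ ∞ v) (p : E) :
    ∃ (Φ : ℝ × E → E) (W : Set (ℝ × E)), IsOpen W ∧ (0, p) ∈ W ∧ ContDiffOn ℝ ∞ Φ W ∧
      (∀ q, (0, q) ∈ W → Φ (0, q) = q) ∧
      ∀ t q, (t, q) ∈ W → HasDerivAt (fun τ => Φ (τ, q)) (v (Φ (t, q))) t := by
  let w : C(E, E) := ⟨v, hv.continuous⟩
  obtain ⟨D, hD⟩ := exists_hasFDerivAt_picardMap w hv p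
  obtain ⟨e, hx₀, -, he, hsymm⟩ := exists_openPartialHomeomorph_contDiffOn_symm isOpen_univ
    (contDiff_picardMap w hv).contDiffOn (mem_univ _) D hD
  obtain ⟨r, hr, hball⟩ := Metric.isOpen_iff.1 e.open_source _ hx₀
  set γ₀ : C(unitInterval, E) := ContinuousMap.const unitInterval p with hγ₀
  let j : ℝ × E → (ℝ × E) × C(unitInterval, E) := fun u => (u, 0)
  have hj : ContDiff ℝ ∞ j := contDiff_id.prodMk contDiff_const
  let Γ : ℝ × E → C(unitInterval, E) := fun u => (e.symm (j u)).2
  have hΓ : ContDiffOn ℝ ∞ Γ (j ⁻¹' e.target) :=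
    contDiff_snd.comp_contDiffOn (hsymm.comp hj.contDiffOn fun _ h => h)
  have hTo : IsOpen (j ⁻¹' e.target) := e.open_target.preimage hj.continuous
  let W : Set (ℝ × E) :=
    ((j ⁻¹' e.target) ∩ Γ ⁻¹' Metric.ball γ₀ r) ∩ Metric.ball (0, p) r
  have hW : IsOpen W :=
    (hΓ.continuousOn.isOpen_inter_preimage hTo Metric.isOpen_ball).inter Metric.isOpen_ball
  -- Near the base point, `Γ u` is the only solution of the integral equation with parameter `u`.
  have huniq : ∀ u ∈ Metric.ball ((0 : ℝ), p) r, ∀ γ ∈ Metric.ball γ₀ r,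
      γ - ContinuousLinearMap.const (R := ℝ) unitInterval u.2 - u.1 • primitive E (w.comp γ) = 0 →
      u ∈ W ∧ Γ u = γ := by
    intro u hu γ hγ h
    have hmem : (u, γ) ∈ e.source := hball (by
      rw [← ball_prod_same]; exact ⟨hu, hγ⟩)
    have heq : e (u, γ) = j u := by
      rw [he]; exact Prod.ext rfl h
    have hΓu : Γ u = γ := by
      change (e.symm (j u)).2 = γ
      rw [← heq, e.left_inv hmem]
    refine ⟨⟨⟨?_, ?_⟩, hu⟩, hΓu⟩
    · rw [mem_preimage, ← heq]; exact e.map_source hmem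
    · rw [mem_preimage, hΓu]; exact hγ
  have hsol : ∀ u ∈ W, Γ u = ContinuousLinearMap.const (R := ℝ) unitInterval u.2 +
      u.1 • primitive E (w.comp (Γ u)) := by
    intro u hu
    have h := e.right_inv hu.1.1
    rw [he] at h
    have h1 : (e.symm (j u)).1 = u := congrArg Prod.fst h
    have h2 := congrArg Prod.snd h
    simp only [picardMap, h1] at h2
    rw [sub_sub, sub_eq_zero] at h2
    exact h2
  let Φ : ℝ × E → E := fun u => Γ u 1
  have hΦ : ContDiffOn ℝ ∞ Φ W :=
    ((ContinuousMap.evalCLM ℝ (M := E) (1 : unitInterval)).contDiff.comp_contDiffOn hΓ).mono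
      fun u hu => hu.1.1
  -- By uniqueness, the solution with time parameter `s * t` is a rescaling of the one for `t`. In
  -- particular `W` is star-shaped in the time direction.
  have hscale : ∀ t q, (t, q) ∈ W → ∀ s : unitInterval, ((s : ℝ) * t, q) ∈ W ∧
      Φ ((s : ℝ) * t, q) = Γ (t, q) s := by
    intro t q hu s
    have hs := s.2
    have h1 : ((s : ℝ) * t, q) ∈ Metric.ball ((0 : ℝ), p) r := by
      have := hu.2
      rw [← ball_prod_same] at this ⊢
      refine ⟨?_, this.2⟩
      have h := this.1
      rw [mem_ball_zero_iff, Real.norm_eq_abs] at h ⊢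
      rw [abs_mul, abs_of_nonneg hs.1]
      exact (mul_le_of_le_one_left (abs_nonneg _) hs.2).trans_lt h
    have h2 : (Γ (t, q)).comp (rescale s) ∈ Metric.ball γ₀ r := by
      have h := hu.1.2
      rw [mem_preimage, Metric.mem_ball] at h
      refine lt_of_le_of_lt ((ContinuousMap.dist_le dist_nonneg).2 fun σ => ?_) h
      exact ContinuousMap.dist_apply_le_dist (f := Γ (t, q)) (g := γ₀) (s * σ)
    have h3 := huniq _ h1 _ h2 (by
      have h := congrArg (fun γ : C(unitInterval, E) => γ.comp (rescale s)) (hsol _ hu)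
      have hp := primitive_rescale (w.comp (Γ (t, q))) s
      rw [sub_sub, sub_eq_zero]
      refine h.trans ?_
      change _ = _ + ((s : ℝ) * t) • primitive E ((w.comp (Γ (t, q))).comp (rescale s))
      rw [mul_comm, mul_smul, hp]
      rfl)
    refine ⟨h3.1, ?_⟩
    change Γ _ 1 = _
    rw [h3.2]
    change Γ (t, q) (s * 1) = _
    rw [mul_one]
  -- Evaluating the integral equation at `1` and substituting `τ = σ t` gives the integral form of the
  -- differential equation.
  have hint : ∀ t q, (t, q) ∈ W → Φ (t, q) = q + ∫ τ in (0 : ℝ)..t, v (Φ (τ, q)) := by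
    intro t q hu
    have h := congrArg (fun γ : C(unitInterval, E) => γ 1) (hsol _ hu)
    refine h.trans ?_
    change q + t • primitive E (w.comp (Γ (t, q))) 1 = _
    congr 1
    have hc := intervalIntegral.smul_integral_comp_mul_right (a := 0) (b := 1)
      (fun τ => v (Φ (τ, q))) t
    rw [zero_mul, one_mul] at hc
    rw [← hc, primitive_apply]
    congr 1
    refine intervalIntegral.integral_congr fun σ hσ => ?_
    have hσ' : σ ∈ unitInterval := by rwa [Set.Icc.coe_one, uIcc_of_le zero_le_one] at hσ
    rw [IccExtend_of_mem _ _ hσ']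
    change v (Γ (t, q) ⟨σ, hσ'⟩) = v (Φ (σ * t, q))
    rw [← (hscale t q hu ⟨σ, hσ'⟩).2]
  refine ⟨Φ, W, hW, ?_, hΦ, fun q hq => ?_, fun t q hu => ?_⟩
  · refine (huniq (0, p) (Metric.mem_ball_self hr) γ₀ (Metric.mem_ball_self hr) ?_).1
    rw [zero_smul, sub_zero]
    exact sub_self _
  · rw [hint 0 q hq, intervalIntegral.integral_same, add_zero]
  · have hQ : IsOpen {τ : ℝ | (τ, q) ∈ W} := hW.preimage (by fun_prop)
    have hc : ContinuousOn (fun τ => v (Φ (τ, q))) {τ : ℝ | (τ, q) ∈ W} :=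
      hv.continuous.comp_continuousOn
        (hΦ.continuousOn.comp (by fun_prop) fun _ h => h)
    -- `W` contains the whole time segment from `0` to `t`, so the integrand is continuous there.
    have hsub : uIcc 0 t ⊆ {τ : ℝ | (τ, q) ∈ W} := by
      intro τ hτ
      rw [← segment_eq_uIcc, segment_eq_image] at hτ
      obtain ⟨θ, hθ, rfl⟩ := hτ
      simpa using (hscale t q hu ⟨θ, hθ⟩).1
    have hd := intervalIntegral.integral_hasDerivAt_right (hc.mono hsub).intervalIntegrable
      (hc.stronglyMeasurableAtFilter hQ t hu) (hc.continuousAt (hQ.mem_nhds hu))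
    refine (hd.const_add q).congr_of_eventuallyEq ?_
    filter_upwards [hQ.mem_nhds hu] with τ hτ
    exact hint τ q hτ

end Flow

/-! ### Straightening a planar vector field -/

theorem exists_basis_of_ne_zero {w : Vec 2} (hw : w ≠ 0) :
    ∃ e : Vec 2, IsUnit (Matrix.of ![w, e])ᵀ := by
  simp_rw [Matrix.isUnit_iff_isUnit_det, isUnit_iff_ne_zero, det_transpose, det_fin_two]
  by_cases h : w 0 = 0
  · refine ⟨![1, 0], ?_⟩
    have : w 1 ≠ 0 := fun h1 => hw (by ext i; fin_cases i <;> simp [h, h1])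
    simpa using this
  · exact ⟨![0, 1], by simpa using h⟩

/-- Near a point where it does not vanish, a smooth planar vector field is the first coordinate
field of a smooth chart. Here `e` is the parametrization, that is, the inverse of the chart. -/
theorem exists_straightening (v : VF 2) (hv : ContDiff ℝ ∞ v) (p : Vec 2) (hp : v p ≠ 0) :
    ∃ e : OpenPartialHomeomorph (Vec 2) (Vec 2), p ∈ e.target ∧
      ContDiffOn ℝ ∞ e e.source ∧ ContDiffOn ℝ ∞ e.symm e.target ∧
      ∀ y ∈ e.source, fderiv ℝ e y (Pi.single 0 1) = v (e y) := by
  obtain ⟨Φ, W, hW, hmem, hΦ, hΦ0, hΦt⟩ := exists_contDiffOn_flow v hv p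
  obtain ⟨b, hb⟩ := exists_basis_of_ne_zero hp
  let j : Vec 2 → ℝ × Vec 2 := fun y => (y 0, p + y 1 • b)
  have hj : ContDiff ℝ ∞ j :=
    (contDiff_apply ℝ ℝ 0).prodMk
      (contDiff_const.add ((contDiff_apply ℝ ℝ 1).smul contDiff_const))
  let S := j ⁻¹' W
  have hS : IsOpen S := hW.preimage hj.continuous
  let F : VF 2 := fun y => Φ (j y)
  have hF : ContDiffOn ℝ ∞ F S := hΦ.comp hj.contDiffOn fun _ h => h
  have hFd : ∀ y ∈ S, HasFDerivAt F (fderiv ℝ F y) y := fun y hy =>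
    ((hF.contDiffAt (hS.mem_nhds hy)).differentiableAt (by simp)).hasFDerivAt
  have hF0 : ∀ y ∈ S, fderiv ℝ F y (Pi.single 0 1) = v (F y) := by
    intro y hy
    have hc : HasDerivAt (fun t => Function.update y 0 t) (Pi.single 0 (1 : ℝ)) (y 0) :=
      hasDerivAt_update y 0 (y 0)
    have h2 : HasDerivAt (F ∘ fun t => Function.update y 0 t)
        (fderiv ℝ F y (Pi.single 0 1)) (y 0) :=
      HasFDerivAt.comp_hasDerivAt _ (by simpa using hFd y hy) hc
    have h3 := hΦt (y 0) (p + y 1 • b) hy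
    refine h2.unique (h3.congr_of_eventuallyEq (Eventually.of_forall fun t => ?_))
    simp [F, j]
  have h0S : (0 : Vec 2) ∈ S := by simpa [S, j] using hmem
  have hF00 : F 0 = p := by simpa [F, j] using hΦ0 p hmem
  have hF1 : fderiv ℝ F 0 (Pi.single 1 1) = b := by
    have hc : HasDerivAt (fun t => Function.update (0 : Vec 2) 1 t) (Pi.single 1 (1 : ℝ)) 0 :=
      hasDerivAt_update (0 : Vec 2) 1 0
    have h2 : HasDerivAt (F ∘ fun t => Function.update (0 : Vec 2) 1 t)
        (fderiv ℝ F 0 (Pi.single 1 1)) 0 :=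
      HasFDerivAt.comp_hasDerivAt _ (by simpa using hFd 0 h0S) hc
    have h3 : HasDerivAt (fun t : ℝ => p + t • b) b 0 := by
      simpa using ((hasDerivAt_id (0 : ℝ)).smul_const b).const_add p
    refine h2.unique (h3.congr_of_eventuallyEq ?_)
    have hQ : IsOpen {t : ℝ | ((0 : ℝ), p + t • b) ∈ W} := hW.preimage (by fun_prop)
    filter_upwards [hQ.mem_nhds (by simpa using hmem)] with t ht
    simpa [F, j] using hΦ0 _ ht
  let M : Matrix (Fin 2) (Fin 2) ℝ := (Matrix.of ![v p, b])ᵀ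
  let D : Vec 2 ≃L[ℝ] Vec 2 :=
    (Matrix.toLinearEquiv' M (IsUnit.invertible hb)).toContinuousLinearEquiv
  have hD : HasFDerivAt F (D : Vec 2 →L[ℝ] Vec 2) 0 := by
    refine (hFd 0 h0S).congr_fderiv ?_
    refine ContinuousLinearMap.coe_injective (LinearMap.pi_ext' fun i => LinearMap.ext_ring ?_)
    have hDi : D (Pi.single i 1) = M.col i := Matrix.mulVec_single_one M i
    change fderiv ℝ F 0 (Pi.single i 1) = D (Pi.single i 1)
    rw [hDi]
    fin_cases i
    · exact (hF0 0 h0S).trans (by rw [hF00]; rfl)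
    · exact hF1.trans rfl
  obtain ⟨e, h0e, heS, he, hsymm⟩ :=
    exists_openPartialHomeomorph_contDiffOn_symm hS hF h0S D hD
  refine ⟨e, ?_, ?_, hsymm, ?_⟩
  · rw [← hF00, ← he]; exact e.map_source h0e
  · rw [he]; exact hF.mono heS
  · rw [he]; exact fun y hy => hF0 y (heS hy)

/-! ### Reduction to upper triangular form -/

/-- In coordinates straightening an eigenvector field, the first column of the operator field is
`(f, 0)`, so the operator field is upper triangular. -/
theorem locallyReducible_of_eigenvectorField (L : OpField 2) (v : VF 2) (hv : ContDiff ℝ ∞ v)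
    (f : Vec 2 → ℝ) (hvL : ∀ x, (L x).mulVec (v x) = f x • v x) (p : Vec 2) (hp : v p ≠ 0) :
    LocallyReducible L p UpperTri := by
  obtain ⟨e, hpe, hes, hesymm, he⟩ := exists_straightening v hv p hp
  have himg : e.symm '' e.target = e.source := e.symm_image_target_eq_source
  refine ⟨e.target, e.open_target, hpe, e.symm, e, hesymm, ?_, ?_, fun x hx => e.right_inv hx,
    ?_, ?_⟩
  · rw [himg]; exact e.open_source
  · rwa [himg]
  · rw [himg]; exact fun y hy => e.left_inv hy
  · rw [himg]
    intro y hy i j hij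
    obtain ⟨rfl, rfl⟩ : i = 1 ∧ j = 0 := by
      revert hij; fin_cases i <;> fin_cases j <;> simp
    have hjac : ∀ (g : VF 2) (x w : Vec 2), jacobianMatrix g x *ᵥ w = fderiv ℝ g x w := by
      intro g x w
      conv_rhs => rw [pi_eq_sum_univ' w, map_sum]
      ext i
      simp [jacobianMatrix, mulVec, dotProduct, mul_comm]
    have hcol : (jacobianMatrix e.symm (e y) * L (e y) * jacobianMatrix e y).col 0
        = f (e y) • Pi.single 0 1 := by
      have d1 : HasFDerivAt e (fderiv ℝ e y) y :=
        ((hes.contDiffAt (e.open_source.mem_nhds hy)).differentiableAt (by simp)).hasFDerivAt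
      have d2 : HasFDerivAt e.symm (fderiv ℝ e.symm (e y)) (e y) :=
        ((hesymm.contDiffAt (e.open_target.mem_nhds (e.map_source hy))).differentiableAt
          (by simp)).hasFDerivAt
      have d3 : HasFDerivAt (e.symm ∘ e) (ContinuousLinearMap.id ℝ (Vec 2)) y :=
        (hasFDerivAt_id y).congr_of_eventuallyEq (e.eventually_left_inverse hy)
      have d4 := congrArg (fun A => A (Pi.single 0 1)) ((d2.comp y d1).unique d3)
      simp only [ContinuousLinearMap.comp_apply, ContinuousLinearMap.id_apply] at d4
      rw [← Matrix.mulVec_single_one, ← Matrix.mulVec_mulVec, ← Matrix.mulVec_mulVec, hjac e,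
        he y hy, hvL, Matrix.mulVec_smul, hjac, ← he y hy, d4]
    have := congrFun hcol 1
    simpa using this

/-- in dimension 2, an operator field with a single real eigenvalue
`f = (trace L)/2` of geometric multiplicity one at every point is locally
reducible to upper triangular form near every point. -/
theorem stmt_6 (L : OpField 2) (hL : SmoothOp L)
    (h : ∀ x : Vec 2,
      (L x - ((L x).trace / 2) • (1 : Matrix (Fin 2) (Fin 2) ℝ)) ^ 2 = 0 ∧
      L x ≠ ((L x).trace / 2) • (1 : Matrix (Fin 2) (Fin 2) ℝ)) :
    ∀ p : Vec 2, LocallyReducible L p UpperTri := by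
  intro p
  let f : Vec 2 → ℝ := fun x => (L x).trace / 2
  let N : OpField 2 := fun x => L x - f x • (1 : Matrix (Fin 2) (Fin 2) ℝ)
  have hf : ContDiff ℝ ∞ f := by
    have : f = fun x => (L x 0 0 + L x 1 1) / 2 := by
      ext x; simp [f, Matrix.trace_fin_two]
    rw [this]
    exact ((hL 0 0).add (hL 1 1)).div_const 2
  have hN : ∀ i j, ContDiff ℝ ∞ fun x => N x i j := fun i j =>
    (hL i j).sub (hf.mul contDiff_const)
  -- Every column of `N` is annihilated by `N`; one of them does not vanish at `p`.
  obtain ⟨k, hk⟩ : ∃ k, (N p).col k ≠ 0 := by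
    by_contra! hcon
    refine (h p).2 (sub_eq_zero.1 (?_ : N p = 0))
    ext i j
    exact congrFun (hcon j) i
  refine locallyReducible_of_eigenvectorField L (fun x => (N x).col k)
    (contDiff_pi.2 fun i => hN i k) f (fun x => ?_) p hk
  have hNN : N x *ᵥ (N x).col k = 0 := by
    rw [← Matrix.mulVec_single_one, Matrix.mulVec_mulVec, ← pow_two, (h x).1, Matrix.zero_mulVec]
  rw [← sub_eq_zero, ← hNN]
  simp only [N, Matrix.sub_mulVec, Matrix.smul_mulVec, Matrix.one_mulVec]
end

section
/- For every smooth operator field L on ℝ², the Haantjes torsion of L vanishes identically: H_L(ξ, η)(x) = 0 for all smooth vector fields ξ, η on ℝ² and all x ∈ ℝ². -/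
/-!
The Nijenhuis torsion is tensorial: all derivatives of the vector fields cancel, and
`T_L(ξ, η)(x) = τ(ξ x, η x)` with
`τ(u, v) = (∂_{Lu} L) v - (∂_{Lv} L) u + L (∂_v L) u - L (∂_u L) v`,
an alternating bilinear form (`nijTor_apply`). On a plane such a form is `det(u, v) • w` for a
fixed vector `w` (`nijForm_eq_det_smul`), so at each point
`H_L(ξ, η) = det(ξ, η) • (L² - (tr L) L + (det L) 1) w`, because
`det(Lu, v) + det(u, Lv) = tr L · det(u, v)` and `det(Lu, Lv) = det L · det(u, v)`.
This vanishes by the Cayley–Hamilton theorem.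
-/

open Matrix

/-- The directional derivative of the operator field `L` at `x` along `v`, taken entrywise (so that
no norm on matrices is needed). -/
noncomputable def opDeriv {n : ℕ} (L : OpField n) (x v : Vec n) : Matrix (Fin n) (Fin n) ℝ :=
  Matrix.of fun i j => fderiv ℝ (fun y => L y i j) x v

/-- The Nijenhuis torsion at the point `x`, as a form on the tangent space. -/
noncomputable def nijForm {n : ℕ} (L : OpField n) (x u v : Vec n) : Vec n :=
  opDeriv L x (L x *ᵥ u) *ᵥ v - opDeriv L x (L x *ᵥ v) *ᵥ u
    + L x *ᵥ (opDeriv L x v *ᵥ u) - L x *ᵥ (opDeriv L x u *ᵥ v)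

theorem smoothVF_app {n : ℕ} {L : OpField n} (hL : SmoothOp L) {ξ : VF n} (hξ : SmoothVF ξ) :
    SmoothVF (app L ξ) := by
  refine contDiff_pi.2 fun i => ?_
  change ContDiff ℝ _ fun x => ∑ j, L x i j * ξ x j
  exact ContDiff.sum fun j _ => (hL i j).mul (contDiff_pi.1 hξ j)

/-- The Leibniz rule for the action of an operator field on a vector field. -/
theorem fderiv_app {n : ℕ} {L : OpField n} (hL : SmoothOp L) {ξ : VF n} (hξ : SmoothVF ξ)
    (x v : Vec n) :
    fderiv ℝ (app L ξ) x v = opDeriv L x v *ᵥ ξ x + L x *ᵥ fderiv ℝ ξ x v := by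
  have hLd : ∀ i j, HasFDerivAt (fun y => L y i j) (fderiv ℝ (fun y => L y i j) x) x :=
    fun i j => ((hL i j).differentiable (by simp) x).hasFDerivAt
  have hξd : HasFDerivAt ξ (fderiv ℝ ξ x) x :=
    (ContDiff.differentiable hξ (by simp) x).hasFDerivAt
  have key : HasFDerivAt (app L ξ) (ContinuousLinearMap.pi fun i => ∑ j,
      (L x i j • (ContinuousLinearMap.proj j).comp (fderiv ℝ ξ x)
        + ξ x j • fderiv ℝ (fun y => L y i j) x)) x := by
    refine hasFDerivAt_pi.2 fun i => ?_
    change HasFDerivAt (fun y => ∑ j, L y i j * ξ y j) _ x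
    exact HasFDerivAt.fun_sum fun j _ => (hLd i j).mul (hasFDerivAt_pi'.1 hξd j)
  rw [key.fderiv]
  ext i
  simp [Matrix.mulVec, dotProduct, opDeriv, Finset.sum_add_distrib, mul_comm, add_comm]

/-- Tensoriality of the Nijenhuis torsion. -/
theorem nijTor_apply {n : ℕ} {L : OpField n} (hL : SmoothOp L) {ξ η : VF n}
    (hξ : SmoothVF ξ) (hη : SmoothVF η) (x : Vec n) :
    nijTor L ξ η x = nijForm L x (ξ x) (η x) := by
  simp only [nijTor, nijForm, lieB, Pi.add_apply, Pi.sub_apply, fderiv_app hL hξ,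
    fderiv_app hL hη, show ∀ (ζ : VF n) (y : Vec n), app L ζ y = L y *ᵥ ζ y from fun _ _ => rfl,
    Matrix.mulVec_add, Matrix.mulVec_sub]
  abel

theorem opDeriv_two (L : OpField 2) (x v : Vec 2) :
    opDeriv L x v =
      v 0 • opDeriv L x (Pi.single 0 1) + v 1 • opDeriv L x (Pi.single 1 1) := by
  have hv : v = v 0 • Pi.single 0 1 + v 1 • Pi.single 1 1 := by
    ext i; fin_cases i <;> simp
  ext i j
  simp only [opDeriv, Matrix.of_apply, Matrix.add_apply, Matrix.smul_apply]
  conv_lhs => rw [hv]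
  rw [map_add, map_smul, map_smul]

/-- In dimension two, an alternating form is a multiple of the determinant. -/
theorem nijForm_eq_det_smul (L : OpField 2) (x u v : Vec 2) :
    nijForm L x u v =
      (u 0 * v 1 - u 1 * v 0) • nijForm L x (Pi.single 0 1) (Pi.single 1 1) := by
  simp only [nijForm]
  rw [opDeriv_two L x (L x *ᵥ u), opDeriv_two L x (L x *ᵥ v), opDeriv_two L x u,
    opDeriv_two L x v, opDeriv_two L x (L x *ᵥ Pi.single 0 1),
    opDeriv_two L x (L x *ᵥ Pi.single 1 1)]
  generalize opDeriv L x (Pi.single 0 1) = A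
  generalize opDeriv L x (Pi.single 1 1) = B
  ext i
  fin_cases i <;>
  · simp [Matrix.mulVec, dotProduct, Fin.sum_univ_two, vecHead, vecTail]
    ring

/-- in dimension 2 the Haantjes torsion of every smooth operator
field vanishes identically. -/
theorem stmt_7 (L : OpField 2) (hL : SmoothOp L) :
    ∀ ξ η : VF 2, SmoothVF ξ → SmoothVF η →
      ∀ x : Vec 2, haantjes L ξ η x = 0 := by
  intro ξ η hξ hη x
  have hLξ := smoothVF_app hL hξ
  have hLη := smoothVF_app hL hη
  simp only [haantjes, genTor, Pi.add_apply, Pi.sub_apply,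
    show ∀ (ζ : VF 2) (y : Vec 2), app L ζ y = L y *ᵥ ζ y from fun _ _ => rfl,
    nijTor_apply hL hξ hη, nijTor_apply hL hLξ hLη, nijTor_apply hL hLξ hη,
    nijTor_apply hL hξ hLη]
  rw [nijForm_eq_det_smul L x (ξ x) (η x), nijForm_eq_det_smul L x (L x *ᵥ ξ x) (L x *ᵥ η x),
    nijForm_eq_det_smul L x (L x *ᵥ ξ x) (η x), nijForm_eq_det_smul L x (ξ x) (L x *ᵥ η x)]
  generalize nijForm L x (Pi.single 0 1) (Pi.single 1 1) = w
  -- In coordinates, what remains is the Cayley–Hamilton identity for `L x` applied to `w`.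
  ext i
  fin_cases i <;>
  · simp [Matrix.mulVec, dotProduct, Fin.sum_univ_two, vecHead, vecTail]
    ring
end

section
/- The generalized Haantjes brackets are tensorial: for all smooth operator fields K, L on ℝⁿ, every m ≥ 1, every smooth function f : ℝⁿ → ℝ and all smooth vector fields ξ, η, one has H^{(m)}_{K,L}(f·ξ, η) = f·H^{(m)}_{K,L}(ξ, η) and H^{(m)}_{K,L}(ξ, f·η) = f·H^{(m)}_{K,L}(ξ, η) (pointwise on ℝⁿ). -/
/-!
Replacing `ξ` by `f • ξ` in a Lie bracket produces, besides `f • [ξ, η]`, the term `-(η f) • ξ`, and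
replacing `η` by `f • η` produces `(ξ f) • η` (`lieB_smul_left`, `lieB_smul_right`). In the eight
terms of the Frölicher–Nijenhuis bracket these derivative terms cancel in pairs; this does not
require `K` and `L` to commute, because both products `KL` and `LK` occur. Hence level one is
tensorial. The recursion builds each further level from the previous one by pointwise linear
operations (application of `K` and `L`), which commute with multiplication by `f`, so tensoriality
propagates by induction on the level, over all smooth vector fields at once.
-/

open Matrix

theorem app_smul {n : ℕ} (L : OpField n) (f : Vec n → ℝ) (ξ : VF n) :
    app L (fun y => f y • ξ y) = fun y => f y • app L ξ y := by
  funext x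
  simp [app, Matrix.mulVec_smul]

theorem SmoothVF.differentiable {n : ℕ} {ξ : VF n} (h : SmoothVF ξ) : Differentiable ℝ ξ :=
  ContDiff.differentiable h (by simp)

theorem lieB_smul_left {n : ℕ} {f : Vec n → ℝ} (hf : Differentiable ℝ f) {ξ : VF n}
    (hξ : SmoothVF ξ) (η : VF n) :
    lieB (fun y => f y • ξ y) η = fun x => f x • lieB ξ η x - fderiv ℝ f x (η x) • ξ x := by
  funext x
  simp only [lieB]
  rw [fderiv_fun_smul (hf x) (hξ.differentiable x)]
  simp only [map_smul, _root_.add_apply, _root_.smul_apply,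
    ContinuousLinearMap.smulRight_apply]
  module

theorem lieB_smul_right {n : ℕ} {f : Vec n → ℝ} (hf : Differentiable ℝ f) (ξ : VF n) {η : VF n}
    (hη : SmoothVF η) :
    lieB ξ (fun y => f y • η y) = fun x => f x • lieB ξ η x + fderiv ℝ f x (ξ x) • η x := by
  funext x
  simp only [lieB]
  rw [fderiv_fun_smul (hf x) (hη.differentiable x)]
  simp only [map_smul, _root_.add_apply, _root_.smul_apply,
    ContinuousLinearMap.smulRight_apply]
  module

theorem fnB_smul_left {n : ℕ} {K L : OpField n} (hK : SmoothOp K) (hL : SmoothOp L)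
    {f : Vec n → ℝ} (hf : Differentiable ℝ f) {ξ η : VF n} (hξ : SmoothVF ξ) :
    fnB K L (fun y => f y • ξ y) η = fun x => f x • fnB K L ξ η x := by
  simp only [fnB, app_smul, lieB_smul_left hf hξ, lieB_smul_left hf (smoothVF_app hK hξ),
    lieB_smul_left hf (smoothVF_app hL hξ)]
  funext x
  simp only [Pi.add_apply, Pi.sub_apply, app, Matrix.mulVec_sub, Matrix.mulVec_smul]
  module

theorem fnB_smul_right {n : ℕ} {K L : OpField n} (hK : SmoothOp K) (hL : SmoothOp L)
    {f : Vec n → ℝ} (hf : Differentiable ℝ f) {ξ η : VF n} (hη : SmoothVF η) :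
    fnB K L ξ (fun y => f y • η y) = fun x => f x • fnB K L ξ η x := by
  simp only [fnB, app_smul, lieB_smul_right hf _ hη, lieB_smul_right hf _ (smoothVF_app hK hη),
    lieB_smul_right hf _ (smoothVF_app hL hη)]
  funext x
  simp only [Pi.add_apply, Pi.sub_apply, app, Matrix.mulVec_add, Matrix.mulVec_smul]
  module

theorem genB_smul {n : ℕ} {K L : OpField n} (hK : SmoothOp K) (hL : SmoothOp L)
    {f : Vec n → ℝ} (hf : Differentiable ℝ f) (m : ℕ) :
    ∀ ξ η : VF n, SmoothVF ξ → SmoothVF η →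
      (genB K L m (fun y => f y • ξ y) η = fun x => f x • genB K L m ξ η x) ∧
      (genB K L m ξ (fun y => f y • η y) = fun x => f x • genB K L m ξ η x) := by
  induction m with
  | zero => exact fun ξ η hξ hη => ⟨fnB_smul_left hK hL hf hξ, fnB_smul_right hK hL hf hη⟩
  | succ m ih =>
    intro ξ η hξ hη
    have hKξ := smoothVF_app hK hξ
    have hLξ := smoothVF_app hL hξ
    have hKη := smoothVF_app hK hη
    have hLη := smoothVF_app hL hη
    constructor
    · simp only [genB, app_smul, (ih _ _ hξ hη).1, (ih _ _ hKξ hLη).1, (ih _ _ hKξ hη).1,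
        (ih _ _ hξ hLη).1, (ih _ _ hLξ hKη).1, (ih _ _ hLξ hη).1, (ih _ _ hξ hKη).1]
      funext x
      simp only [Pi.add_apply, Pi.sub_apply]
      module
    · simp only [genB, app_smul, (ih _ _ hξ hη).2, (ih _ _ hKξ hLη).2, (ih _ _ hKξ hη).2,
        (ih _ _ hξ hLη).2, (ih _ _ hLξ hKη).2, (ih _ _ hLξ hη).2, (ih _ _ hξ hKη).2]
      funext x
      simp only [Pi.add_apply, Pi.sub_apply]
      module

/-- the generalized Haantjes brackets `H^{(m)}_{K,L} = genB K L (m - 1)`,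
`m ≥ 1`, are tensorial in both arguments. -/
theorem stmt_12 (n : ℕ) (K L : OpField n) (hK : SmoothOp K) (hL : SmoothOp L) (m : ℕ)
    (f : Vec n → ℝ) (hf : ContDiff ℝ (⊤ : ℕ∞) f)
    (ξ η : VF n) (hξ : SmoothVF ξ) (hη : SmoothVF η) :
    (∀ x : Vec n, genB K L m (fun y => f y • ξ y) η x = f x • genB K L m ξ η x) ∧
    (∀ x : Vec n, genB K L m ξ (fun y => f y • η y) x = f x • genB K L m ξ η x) := by
  obtain ⟨h₁, h₂⟩ := genB_smul hK hL (hf.differentiable (by simp)) m ξ η hξ hη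
  exact ⟨congrFun h₁, congrFun h₂⟩
end
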